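/- arXiv:math/9807077 — 2 statements merged into one kernel-verified Lean document; each statement's English description precedes it below -/
import Mathlib

section
/- Let V be a vertex operator algebra of class 𝒜. Then V has only finitely many inequivalent irreducible ℕ-gradable weak V-modules, and for any three irreducible V-modules W₁, W₂, W₃ the fusion rule dim I(W₃; W₁, W₂) is finite. In particular, both conclusions hold when V is regular. -/
noncomputable section

/-- The generalized binomial coefficient `C(m, i)` for `m ∈ ℤ`, `i ∈ ℕ`,
as a complex number: `m(m-1)⋯(m-i+1)/i!`. -/
def cchoose (m : ℤ) (i : ℕ) : ℂ :=
  (∏ j ∈ Finset.range i, ((m : ℂ) - (j : ℂ))) / (Nat.factorial i : ℂ)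

/-- A vertex operator algebra `V = ⊕ₙ V₍ₙ₎` over `ℂ`.  The vertex operator map is
recorded through its modes `op u n v = uₙ v` (so `Y(u,x)v = Σₙ uₙv x^{-n-1}`), with
vacuum `one`, conformal vector `omega` (with `L(k) = ω_{k+1}`), central charge `cc`,
weight grading `wtSpace` with projections `proj`.  The Jacobi identity is recorded in
the equivalent form of the Borcherds identity on modes. -/
structure VOA where
  carrier : Type
  [grp : AddCommGroup carrier]
  [mdl : Module ℂ carrier]
  op : carrier → ℤ → carrier → carrier
  one : carrier
  omega : carrier
  wtSpace : ℤ → Submodule ℂ carrier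
  proj : ℤ → carrier → carrier
  cc : ℂ
  op_linear_left : ∀ (n : ℤ) (w : carrier), IsLinearMap ℂ fun u => op u n w
  op_linear_right : ∀ (u : carrier) (n : ℤ), IsLinearMap ℂ (op u n)
  trunc : ∀ u v : carrier, ∃ N : ℤ, ∀ n : ℤ, N ≤ n → op u n v = 0
  one_op : ∀ (n : ℤ) (v : carrier), op one n v = if n = -1 then v else 0
  create_nonneg : ∀ (v : carrier) (n : ℤ), 0 ≤ n → op v n one = 0
  create : ∀ v : carrier, op v (-1) one = v
  borcherds : ∀ (u v w : carrier) (l m n : ℤ),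
    (∑ᶠ i : ℕ, cchoose m i • op (op u (l + (i : ℤ)) v) (m + n - (i : ℤ)) w)
      = ∑ᶠ i : ℕ, ((-1 : ℂ) ^ i * cchoose l i) •
          (op u (l + m - (i : ℤ)) (op v (n + (i : ℤ)) w)
            - ((-1 : ℂ) ^ l) • op v (l + n - (i : ℤ)) (op u (m + (i : ℤ)) w))
  proj_linear : ∀ n : ℤ, IsLinearMap ℂ (proj n)
  proj_mem : ∀ (n : ℤ) (v : carrier), proj n v ∈ wtSpace n
  proj_eq : ∀ n : ℤ, ∀ v ∈ wtSpace n, proj n v = v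
  proj_ne : ∀ m n : ℤ, m ≠ n → ∀ v ∈ wtSpace m, proj n v = 0
  proj_finite : ∀ v : carrier, (Function.support fun n => proj n v).Finite
  proj_sum : ∀ v : carrier, (∑ᶠ n : ℤ, proj n v) = v
  fd : ∀ n : ℤ, FiniteDimensional ℂ (wtSpace n)
  lower_trunc : ∃ N : ℤ, ∀ n : ℤ, n < N → wtSpace n = ⊥
  one_wt : one ∈ wtSpace 0
  omega_wt : omega ∈ wtSpace 2
  op_wt : ∀ k m n : ℤ, ∀ u ∈ wtSpace k, ∀ v ∈ wtSpace m, op u n v ∈ wtSpace (k + m - n - 1)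
  L_zero : ∀ n : ℤ, ∀ v ∈ wtSpace n, op omega 1 v = (n : ℂ) • v
  L_neg_one : ∀ (u : carrier) (n : ℤ) (w : carrier),
    op (op omega 0 u) n w = (-(n : ℂ)) • op u (n - 1) w
  virasoro : ∀ (m n : ℤ) (v : carrier),
    op omega (m + 1) (op omega (n + 1) v) - op omega (n + 1) (op omega (m + 1) v)
      = ((m : ℂ) - (n : ℂ)) • op omega (m + n + 1) v
        + (if m + n = 0 then (((m : ℂ) ^ 3 - (m : ℂ)) / 12) * cc else 0) • v

attribute [instance] VOA.grp VOA.mdl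

namespace VOA

variable (V : VOA)

/-- The Virasoro operator `L(k) = ω_{k+1}`. -/
def L (k : ℤ) (v : V.carrier) : V.carrier := V.op V.omega (k + 1) v

/-- The positive-weight part `V₊ = ⊕_{n ≥ 1} V₍ₙ₎`. -/
def pos : Submodule ℂ V.carrier := ⨆ (n : ℤ) (_ : 1 ≤ n), V.wtSpace n

/-- Zhu's subspace `C₂(V) = span{u₋₂v : u, v ∈ V}`. -/
def C2 : Submodule ℂ V.carrier :=
  Submodule.span ℂ {x : V.carrier | ∃ u v : V.carrier, x = V.op u (-2) v}

/-- The subspace `C₁(V) = span(v₋₁V₊ (v ∈ V₊) together with L(-1)V)`. -/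
def C1 : Submodule ℂ V.carrier :=
  Submodule.span ℂ
    ({x : V.carrier | ∃ u ∈ V.pos, ∃ v ∈ V.pos, x = V.op u (-1) v}
      ∪ {x : V.carrier | ∃ v : V.carrier, x = V.op V.omega 0 v})

/-- Iterated application of modes: `iterApply [(u¹,n₁),…,(uʳ,n_r)] w = u¹_{n₁} ⋯ uʳ_{n_r} w`. -/
def iterApply : List (V.carrier × ℤ) → V.carrier → V.carrier
  | [], w => w
  | p :: l, w => V.op p.1 p.2 (iterApply l w)

/-- `U ⊆ V` generates `V` as a vertex operator algebra:  `V` is linearly spanned by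
the elements `u¹_{n₁} ⋯ uʳ_{n_r} 1` with `uⁱ ∈ U`, `n_i ∈ ℤ`. -/
def generates (U : Set V.carrier) : Prop :=
  Submodule.span ℂ {x : V.carrier | ∃ l : List (V.carrier × ℤ),
    (∀ p ∈ l, p.1 ∈ U) ∧ x = V.iterApply l V.one} = ⊤

/-- `V` is finitely generated as a vertex operator algebra. -/
def FinitelyGenerated : Prop := ∃ S : Finset V.carrier, V.generates ↑S

end VOA

/-- A weak `V`-module: all axioms of a module (truncation, vacuum, Jacobi identity in
Borcherds form) except those involving gradings. -/
structure WeakModule (V : VOA) where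
  carrier : Type
  [grp : AddCommGroup carrier]
  [mdl : Module ℂ carrier]
  op : V.carrier → ℤ → carrier → carrier
  op_linear_left : ∀ (n : ℤ) (w : carrier), IsLinearMap ℂ fun u => op u n w
  op_linear_right : ∀ (u : V.carrier) (n : ℤ), IsLinearMap ℂ (op u n)
  trunc : ∀ (u : V.carrier) (w : carrier), ∃ N : ℤ, ∀ n : ℤ, N ≤ n → op u n w = 0
  one_op : ∀ (n : ℤ) (w : carrier), op V.one n w = if n = -1 then w else 0
  borcherds : ∀ (u v : V.carrier) (w : carrier) (l m n : ℤ),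
    (∑ᶠ i : ℕ, cchoose m i • op (V.op u (l + (i : ℤ)) v) (m + n - (i : ℤ)) w)
      = ∑ᶠ i : ℕ, ((-1 : ℂ) ^ i * cchoose l i) •
          (op u (l + m - (i : ℤ)) (op v (n + (i : ℤ)) w)
            - ((-1 : ℂ) ^ l) • op v (l + n - (i : ℤ)) (op u (m + (i : ℤ)) w))

attribute [instance] WeakModule.grp WeakModule.mdl

namespace WeakModule

variable {V : VOA} (W : WeakModule V)

/-- `L(0)` acting on a weak module, as a linear map. -/
def L0 : W.carrier →ₗ[ℂ] W.carrier := IsLinearMap.mk' _ (W.op_linear_right V.omega 1)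

/-- The `L(0)`-eigenspace of eigenvalue `h`. -/
def eig (h : ℂ) : Submodule ℂ W.carrier :=
  LinearMap.ker (W.L0 - h • (LinearMap.id : W.carrier →ₗ[ℂ] W.carrier))

/-- The coefficient `v*ₙ` of the adjoint vertex operator
`⟨Y*(v,x)α, w⟩ = ⟨α, Y(e^{xL(1)}(-x^{-2})^{L(0)}v, x^{-1})w⟩` acting on the full dual
space: for `v` homogeneous of weight `h`,
`(v*ₙ α)(w) = (-1)^h Σ_{i≥0} (1/i!) α((L(1)^i v)_{2h-n-i-2} w)`, extended to general
`v` via the weight-space projections. -/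
def dmode (v : V.carrier) (n : ℤ) (α : W.carrier → ℂ) (w : W.carrier) : ℂ :=
  ∑ᶠ h : ℤ, ∑ᶠ i : ℕ,
    ((-1 : ℂ) ^ h / (Nat.factorial i : ℂ)) *
      α (W.op ((V.L 1)^[i] (V.proj h v)) (2 * h - n - (i : ℤ) - 2) w)

/-- `D(W) ⊆ W*`: the linear functionals `α` on `W` such that for every `v ∈ V`,
`Y*(v,x)α ∈ W*((x))`, i.e. `v*ₙ α = 0` for `n` sufficiently large. -/
def DW : Set (W.carrier → ℂ) :=
  {α | IsLinearMap ℂ α ∧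
    ∀ v : V.carrier, ∃ N : ℤ, ∀ n : ℤ, N ≤ n → ∀ w : W.carrier, W.dmode v n α w = 0}

/-- A subspace stable under all modes of all vertex operators, i.e. a `V`-submodule. -/
def IsStable (S : Submodule ℂ W.carrier) : Prop :=
  ∀ (v : V.carrier) (n : ℤ), ∀ m ∈ S, W.op v n m ∈ S

/-- An irreducible (nonzero, no proper nonzero stable subspaces) `V`-submodule. -/
def IsIrreducibleSub (S : Submodule ℂ W.carrier) : Prop :=
  S ≠ ⊥ ∧ W.IsStable S ∧
    ∀ T : Submodule ℂ W.carrier, W.IsStable T → T ≤ S → T = ⊥ ∨ T = S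

/-- A stable subspace which is an ordinary module: `L(0)` acts semisimply on it with
finite-dimensional eigenspaces, and for each `h` the eigenvalues `h + m` do not occur
for `m` a sufficiently negative integer. -/
def IsOrdinarySub (S : Submodule ℂ W.carrier) : Prop :=
  S ≤ (⨆ h : ℂ, W.eig h ⊓ S) ∧ (∀ h : ℂ, FiniteDimensional ℂ ↥(W.eig h ⊓ S)) ∧
    ∀ h : ℂ, ∃ N : ℤ, ∀ m : ℤ, m ≤ N → W.eig (h + (m : ℂ)) ⊓ S = ⊥

/-- The weak module `W` is irreducible. -/
def IsIrreducible : Prop :=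
  (⊥ : Submodule ℂ W.carrier) ≠ ⊤ ∧
    ∀ S : Submodule ℂ W.carrier, W.IsStable S → S = ⊥ ∨ S = ⊤

/-- `Cₙ(W) = span{v₋ₙw : v ∈ V, w ∈ W}`. -/
def Cn (n : ℤ) : Submodule ℂ W.carrier :=
  Submodule.span ℂ {x : W.carrier | ∃ (v : V.carrier) (w : W.carrier), x = W.op v (-n) w}

/-- `B(W) = span(u₋₁W (u ∈ V₊) together with v₀W (v homogeneous, wt v ≥ 2))`. -/
def BW : Submodule ℂ W.carrier :=
  Submodule.span ℂ
    ({x : W.carrier | ∃ v ∈ V.pos, ∃ w : W.carrier, x = W.op v (-1) w}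
      ∪ {x : W.carrier | ∃ k : ℤ, 2 ≤ k ∧ ∃ v ∈ V.wtSpace k, ∃ w : W.carrier, x = W.op v 0 w})

/-- Zhu's subspace `O(W) = span{Σ_{i≥0} C(wt v, i) v_{i-2} w}` so that `A(W) = W/O(W)`. -/
def OW : Submodule ℂ W.carrier :=
  Submodule.span ℂ
    {x : W.carrier | ∃ (k : ℤ) (v : V.carrier), v ∈ V.wtSpace k ∧
      ∃ w : W.carrier, x = ∑ᶠ i : ℕ, cchoose k i • W.op v ((i : ℤ) - 2) w}

/-- A subspace `T ⊇ O(W)` of `W` is closed under the Frenkel–Zhu left and right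
`A(V)`-actions `v * w = Σᵢ C(wt v, i) v_{i-1} w` and `w * v = Σᵢ C(wt v - 1, i) v_{i-1} w`;
for `T ⊇ O(W)` this expresses that `T/O(W)` is an `A(V)`-sub-bimodule of `A(W)`. -/
def BimoduleClosed (T : Submodule ℂ W.carrier) : Prop :=
  ∀ k : ℤ, ∀ v ∈ V.wtSpace k, ∀ w ∈ T,
    (∑ᶠ i : ℕ, cchoose k i • W.op v ((i : ℤ) - 1) w) ∈ T ∧
    (∑ᶠ i : ℕ, cchoose (k - 1) i • W.op v ((i : ℤ) - 1) w) ∈ T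

/-- Equivalence (isomorphism) of weak modules. -/
def Equiv (M N : WeakModule V) : Prop :=
  ∃ e : M.carrier ≃ₗ[ℂ] N.carrier,
    ∀ (v : V.carrier) (n : ℤ) (w : M.carrier), e (M.op v n w) = N.op v n (e w)

end WeakModule

/-- `V` is of class 𝒜: `L(0)` acts semisimply on every weak `V`-module. -/
def VOA.classA (V : VOA) : Prop :=
  ∀ M : WeakModule V, (⨆ h : ℂ, M.eig h) = ⊤

/-- `V` is regular: every weak `V`-module is a direct sum of irreducible ordinary
`V`-modules. -/
def VOA.regular (V : VOA) : Prop :=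
  ∀ M : WeakModule V, ∃ (ι : Type) (S : ι → Submodule ℂ M.carrier),
    (∀ i, M.IsIrreducibleSub (S i) ∧ M.IsOrdinarySub (S i)) ∧
    (∀ i, Disjoint (S i) (⨆ (j : ι) (_ : j ≠ i), S j)) ∧ (⨆ i, S i) = ⊤

/-- A generalized `V`-module: a weak module with a semisimple `L(0)`-action, graded by
the `L(0)`-eigenvalues, with weight-space projections `projW`. -/
structure GenModule (V : VOA) extends WeakModule V where
  wt : ℂ → Submodule ℂ carrier
  projW : ℂ → carrier → carrier
  projW_linear : ∀ h : ℂ, IsLinearMap ℂ (projW h)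
  projW_mem : ∀ (h : ℂ) (w : carrier), projW h w ∈ wt h
  projW_eq : ∀ h : ℂ, ∀ w ∈ wt h, projW h w = w
  projW_ne : ∀ g h : ℂ, g ≠ h → ∀ w ∈ wt g, projW h w = 0
  projW_finite : ∀ w : carrier, (Function.support fun h => projW h w).Finite
  projW_sum : ∀ w : carrier, (∑ᶠ h : ℂ, projW h w) = w
  wt_L0 : ∀ h : ℂ, ∀ w ∈ wt h, op V.omega 1 w = h • w
  wt_op : ∀ k : ℤ, ∀ v ∈ V.wtSpace k, ∀ (h : ℂ) (n : ℤ), ∀ w ∈ wt h,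
    op v n w ∈ wt (h + (k : ℂ) - (n : ℂ) - 1)

/-- An ordinary `V`-module: a generalized module whose weight spaces are
finite-dimensional and whose weights are truncated from below in each coset `h + ℤ`. -/
structure OrdModule (V : VOA) extends GenModule V where
  wt_fd : ∀ h : ℂ, FiniteDimensional ℂ ↥(wt h)
  wt_lower : ∀ h : ℂ, ∃ N : ℤ, ∀ m : ℤ, m ≤ N → wt (h + (m : ℂ)) = ⊥

namespace GenModule

variable {V : VOA} (W : GenModule V)

/-- `W₊ = ⊕_{Re h > 0} W₍ₕ₎`. -/
def posW : Submodule ℂ W.carrier := ⨆ (h : ℂ) (_ : 0 < h.re), W.wt h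

/-- `C₁(W) = span(v₋₁W₊ (v ∈ V₊) together with L(-1)W)`. -/
def C1W : Submodule ℂ W.carrier :=
  Submodule.span ℂ
    ({x : W.carrier | ∃ v ∈ V.pos, ∃ w ∈ W.posW, x = W.op v (-1) w}
      ∪ {x : W.carrier | ∃ w : W.carrier, x = W.op V.omega 0 w})

/-- The restricted dual `W' = ⊕ₕ W₍ₕ₎* ⊆ W*`: the linear functionals vanishing on all
but finitely many weight spaces. -/
def restrictedDual : Set (W.carrier → ℂ) :=
  {α | IsLinearMap ℂ α ∧ {h : ℂ | ∃ w ∈ W.wt h, α w ≠ 0}.Finite}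

end GenModule

/-- `D(W)⁰`: the sum of the `L(0)`-eigenspaces of the weak module `D(W) ⊆ W*`, where
`L*(0) = ω*₁` acts on `α ∈ W*` by `(L*(0)α)(w) = α(L(0)w)`. -/
def OrdModule.DW0 {V : VOA} (W : OrdModule V) : Set (W.carrier → ℂ) :=
  {α | ∃ (S : Finset ℂ) (f : ℂ → (W.carrier → ℂ)),
    (∀ h ∈ S, f h ∈ W.toWeakModule.DW ∧
      ∀ w : W.carrier, f h (W.op V.omega 1 w) = h * f h w) ∧
    α = ∑ h ∈ S, f h}

/-- An ℕ-gradable weak `V`-module: a weak module with an ℕ-grading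
`W = ⊕_{n∈ℕ} W(n)` with `v_m W(n) ⊆ W(wt v + n - m - 1)` (graded pieces of negative
index are zero). -/
structure NGradedModule (V : VOA) extends WeakModule V where
  gr : ℤ → Submodule ℂ carrier
  gr_neg : ∀ n : ℤ, n < 0 → gr n = ⊥
  gr_sup : (⨆ n : ℤ, gr n) = ⊤
  gr_indep : ∀ n : ℤ, Disjoint (gr n) (⨆ (m : ℤ) (_ : m ≠ n), gr m)
  gr_op : ∀ k : ℤ, ∀ v ∈ V.wtSpace k, ∀ m n : ℤ, ∀ w ∈ gr n,
    op v m w ∈ gr (k + n - m - 1)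

/-- An intertwining operator of type `(W₃; W₁ W₂)` in the sense of
Frenkel–Huang–Lepowsky, recorded through its complex-indexed modes
`I w₁ h w₂ = (w₁)ₕ w₂` (so `Y(w₁,x)w₂ = Σ_{h∈ℂ} (w₁)ₕ w₂ x^{-h-1}`):
linearity, truncation, the `L(-1)`-derivative property, and the Jacobi identity in
component (Borcherds) form. -/
def IsIntertwiner {V : VOA} (W1 W2 W3 : OrdModule V)
    (I : W1.carrier → ℂ → W2.carrier → W3.carrier) : Prop :=
  (∀ (h : ℂ) (w2 : W2.carrier), IsLinearMap ℂ fun w1 => I w1 h w2) ∧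
  (∀ (w1 : W1.carrier) (h : ℂ), IsLinearMap ℂ (I w1 h)) ∧
  (∀ (w1 : W1.carrier) (w2 : W2.carrier) (h : ℂ),
    ∃ N : ℤ, ∀ n : ℤ, N ≤ n → I w1 (h + (n : ℂ)) w2 = 0) ∧
  (∀ (w1 : W1.carrier) (h : ℂ) (w2 : W2.carrier),
    I (W1.op V.omega 0 w1) h w2 = (-h) • I w1 (h - 1) w2) ∧
  (∀ (u : V.carrier) (w1 : W1.carrier) (w2 : W2.carrier) (l m : ℤ) (h : ℂ),
    (∑ᶠ i : ℕ, cchoose m i • I (W1.op u (l + (i : ℤ)) w1) ((m : ℂ) + h - (i : ℂ)) w2)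
      = ∑ᶠ i : ℕ, ((-1 : ℂ) ^ i * cchoose l i) •
          (W3.op u (l + m - (i : ℤ)) (I w1 (h + (i : ℂ)) w2)
            - ((-1 : ℂ) ^ l) • I w1 ((l : ℂ) + h - (i : ℂ)) (W2.op u (m + (i : ℤ)) w2)))

/-- The fusion rule `dim I(W₃; W₁W₂)` is finite: the space of intertwining operators of
the indicated type is finite-dimensional. -/
def FusionFinite {V : VOA} (W1 W2 W3 : OrdModule V) : Prop :=
  FiniteDimensional ℂ
    ↥(Submodule.span ℂ {I : W1.carrier → ℂ → W2.carrier → W3.carrier |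
        IsIntertwiner W1 W2 W3 I})

end

noncomputable section

namespace VAux

/-- The antidiagonal of `n` in `ℕ × ℕ`. -/
abbrev ad (n : ℕ) : Finset (ℕ × ℕ) := Finset.HasAntidiagonal.antidiagonal n

/-! ### Binomial coefficients -/

theorem cc_zero (m : ℤ) : cchoose m 0 = 1 := by simp [cchoose]

theorem cc_succ (m : ℤ) (s : ℕ) :
    ((s : ℂ) + 1) * cchoose m (s + 1) = ((m : ℂ) - s) * cchoose m s := by
  unfold cchoose
  rw [Finset.prod_range_succ, Nat.factorial_succ]
  have h1 : ((s : ℂ) + 1) ≠ 0 := by exact_mod_cast Nat.succ_ne_zero s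
  have h2 : (s.factorial : ℂ) ≠ 0 := by exact_mod_cast s.factorial_ne_zero
  push_cast
  field_simp

theorem cc_eq (m : ℤ) (s : ℕ) : cchoose m s = Ring.choose (m : ℂ) s := by
  induction s with
  | zero => simp [cc_zero]
  | succ s ih =>
    have h1 : ((s : ℂ) + 1) ≠ 0 := by exact_mod_cast Nat.succ_ne_zero s
    apply mul_left_cancel₀ h1
    rw [cc_succ, ih]
    have := Ring.choose_add_smul_choose (m : ℂ) s 1
    have e := Ring.choose_smul_choose (m : ℂ) (n := s + 1) (k := s) (by omega)
    simp at e
    rw [e, mul_comm]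

theorem cc_pascal (m : ℤ) (s : ℕ) :
    cchoose (m + 1) (s + 1) = cchoose m s + cchoose m (s + 1) := by
  rw [cc_eq, cc_eq, cc_eq]
  push_cast
  exact Ring.choose_succ_succ _ _

theorem cc_zero_left (s : ℕ) : cchoose 0 (s + 1) = 0 := by
  rw [cc_eq]; simp

theorem cc_neg (x : ℤ) (s : ℕ) : cchoose (s - 1 - x) s = (-1) ^ s * cchoose x s := by
  unfold cchoose
  rw [← Finset.prod_range_reflect, ← mul_div_assoc]
  congr 1
  rw [← Finset.card_range s, ← Finset.prod_const, Finset.card_range, ← Finset.prod_mul_distrib]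
  refine Finset.prod_congr rfl fun j hj => ?_
  have hj' := Finset.mem_range.1 hj
  have : ((s - 1 - j : ℕ) : ℂ) = (s : ℂ) - 1 - j := by
    rw [Nat.sub_sub, Nat.cast_sub (by omega)]; push_cast; ring
  rw [this]; push_cast; ring

theorem cc_neg_two (s : ℕ) : (-1 : ℂ) ^ s * cchoose (-2) s = s + 1 := by
  induction s with
  | zero => simp [cc_zero]
  | succ s ih =>
    have h1 : ((s : ℂ) + 1) ≠ 0 := by exact_mod_cast Nat.succ_ne_zero s
    apply mul_left_cancel₀ h1
    have := cc_succ (-2) s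
    calc ((s : ℂ) + 1) * ((-1) ^ (s + 1) * cchoose (-2) (s + 1))
        = -((-1) ^ s * (((s : ℂ) + 1) * cchoose (-2) (s + 1))) := by ring
      _ = ((s : ℂ) + 2) * ((-1) ^ s * cchoose (-2) s) := by rw [this]; push_cast; ring
      _ = _ := by rw [ih]; push_cast; ring

theorem cc_vander (Y m : ℤ) (r : ℕ) :
    ∑ x ∈ ad r, (-1 : ℂ) ^ x.1 * cchoose m x.1 * cchoose (Y - x.1) x.2
      = cchoose (Y - m) r := by
  have h1 : cchoose (r - 1 - (Y - m)) r
      = ∑ x ∈ ad r, cchoose m x.1 * cchoose (r - 1 - Y) x.2 := by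
    simp only [cc_eq]
    rw [← Ring.add_choose_eq r (Commute.all _ _)]
    congr 1; push_cast; ring
  have h2 : cchoose (Y - m) r = (-1) ^ r * cchoose (r - 1 - (Y - m)) r := by
    rw [cc_neg, ← mul_assoc, ← mul_pow]; simp
  rw [h2, h1, Finset.mul_sum]
  refine Finset.sum_congr rfl fun x hx => ?_
  have hx' : x.1 + x.2 = r := Finset.HasAntidiagonal.mem_antidiagonal.1 hx
  have h3 : cchoose (r - 1 - Y) x.2 = (-1) ^ x.2 * cchoose (Y - x.1) x.2 := by
    rw [← cc_neg]; congr 1; rw [← hx']; push_cast; ring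
  rw [h3, ← hx', pow_add]
  have : (-1 : ℂ) ^ x.2 * (-1) ^ x.2 = 1 := by rw [← mul_pow]; simp
  linear_combination (-(-1 : ℂ) ^ x.1 * cchoose m x.1 * cchoose (Y - x.1) x.2) * this

/-! ### Sums -/

theorem finsum_range {E : Type*} [AddCommMonoid E] (f : ℕ → E) (T : ℕ)
    (h : ∀ i, T ≤ i → f i = 0) : ∑ᶠ i, f i = ∑ i ∈ Finset.range T, f i := by
  apply finsum_eq_sum_of_support_subset
  intro i hi
  by_contra hc
  simp only [Finset.coe_range, Set.mem_Iio, not_lt] at hc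
  exact hi (h i hc)

theorem box {E : Type*} [AddCommMonoid E] (T : ℕ) (F : ℕ → ℕ → E)
    (h : ∀ p b, T ≤ p + b → F p b = 0) :
    ∑ t ∈ Finset.range T, ∑ x ∈ ad t, F x.1 x.2
      = ∑ p ∈ Finset.range T, ∑ b ∈ Finset.range T, F p b := by
  rw [← Finset.sum_product' (Finset.range T) (Finset.range T) F]
  have e1 : ∑ x ∈ Finset.range T ×ˢ Finset.range T, F x.1 x.2
      = ∑ x ∈ (Finset.range T ×ˢ Finset.range T).filter (fun x => x.1 + x.2 < T), F x.1 x.2 := by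
    symm
    apply Finset.sum_subset (Finset.filter_subset _ _)
    intro x hx hx'
    apply h
    simp only [Finset.mem_filter, hx, true_and, not_lt] at hx'
    exact hx'
  rw [e1, ← Finset.sum_fiberwise_of_maps_to (t := Finset.range T) (g := fun x : ℕ × ℕ => x.1 + x.2)]
  · refine Finset.sum_congr rfl fun t ht => Finset.sum_congr ?_ fun _ _ => rfl
    ext x
    simp only [Finset.HasAntidiagonal.mem_antidiagonal, Finset.mem_filter, Finset.mem_product, Finset.mem_range] at ht ⊢
    omega
  · intro x hx
    simp only [Finset.mem_filter, Finset.mem_range] at hx ⊢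
    exact hx.2

end VAux
end

noncomputable section

namespace VAux

variable {V : VOA}

/-- Modes of `V` as bilinear maps. -/
def vL (V : VOA) (n : ℤ) : V.carrier →ₗ[ℂ] V.carrier →ₗ[ℂ] V.carrier :=
  LinearMap.mk₂ ℂ (fun u w => V.op u n w)
    (fun a b w => (V.op_linear_left n w).map_add a b)
    (fun c a w => (V.op_linear_left n w).map_smul c a)
    (fun a w x => (V.op_linear_right a n).map_add w x)
    (fun c a w => (V.op_linear_right a n).map_smul c w)

/-- Modes acting on a weak module, as bilinear maps. -/
def oL (W : WeakModule V) (n : ℤ) : V.carrier →ₗ[ℂ] W.carrier →ₗ[ℂ] W.carrier :=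
  LinearMap.mk₂ ℂ (fun u w => W.op u n w)
    (fun a b w => (W.op_linear_left n w).map_add a b)
    (fun c a w => (W.op_linear_left n w).map_smul c a)
    (fun a w x => (W.op_linear_right a n).map_add w x)
    (fun c a w => (W.op_linear_right a n).map_smul c w)

theorem vL_apply (n : ℤ) (u v : V.carrier) : vL V n u v = V.op u n v := rfl
theorem oL_apply (W : WeakModule V) (n : ℤ) (u : V.carrier) (w : W.carrier) :
    oL W n u w = W.op u n w := rfl

theorem v_trunc (u v : V.carrier) (l : ℤ) : ∃ T : ℕ, ∀ i : ℕ, T ≤ i → vL V (l + i) u v = 0 := by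
  obtain ⟨N, hN⟩ := V.trunc u v
  exact ⟨(N - l).toNat, fun i hi => hN _ (by omega)⟩

theorem o_trunc (W : WeakModule V) (u : V.carrier) (w : W.carrier) (l : ℤ) :
    ∃ T : ℕ, ∀ i : ℕ, T ≤ i → oL W (l + i) u w = 0 := by
  obtain ⟨N, hN⟩ := W.trunc u w
  exact ⟨(N - l).toNat, fun i hi => hN _ (by omega)⟩

theorem borch (W : WeakModule V) (u v : V.carrier) (w : W.carrier) (l m n : ℤ) :
    ∃ T0 : ℕ, ∀ T : ℕ, T0 ≤ T →
      ∑ i ∈ Finset.range T, cchoose m i • oL W (m + n - i) (vL V (l + i) u v) w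
      = ∑ i ∈ Finset.range T, ((-1 : ℂ) ^ i * cchoose l i) •
          (oL W (l + m - i) u (oL W (n + i) v w)
            - ((-1 : ℂ) ^ l) • oL W (l + n - i) v (oL W (m + i) u w)) := by
  obtain ⟨A, hA⟩ := v_trunc u v l
  obtain ⟨B, hB⟩ := o_trunc W v w n
  obtain ⟨C, hC⟩ := o_trunc W u w m
  refine ⟨A + B + C, fun T hT => ?_⟩
  have := W.borcherds u v w l m n
  rw [finsum_range _ T, finsum_range _ T] at this
  · exact this
  · intro i hi
    have h1 := hB i (by omega)
    have h2 := hC i (by omega)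
    simp only [oL_apply] at h1 h2
    rw [h1, h2, (W.op_linear_right _ _).map_zero, (W.op_linear_right _ _).map_zero]
    simp
  · intro i hi
    have h1 := hA i (by omega)
    simp only [vL_apply] at h1
    rw [h1, (W.op_linear_left _ _).map_zero, smul_zero]

theorem sum_l_zero {E : Type*} [AddCommGroup E] [Module ℂ E] (T : ℕ) (f : ℕ → E) :
    ∑ i ∈ Finset.range (T + 1), ((-1 : ℂ) ^ i * cchoose 0 i) • f i = f 0 := by
  rw [Finset.sum_range_succ', Finset.sum_eq_zero]
  · simp [cc_zero]
  · intro i _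
    simp [cc_zero_left]

theorem comm (W : WeakModule V) (u v : V.carrier) (w : W.carrier) (m n : ℤ) :
    ∃ T0 : ℕ, ∀ T : ℕ, T0 ≤ T →
      oL W m u (oL W n v w) - oL W n v (oL W m u w)
      = ∑ i ∈ Finset.range T, cchoose m i • oL W (m + n - i) (vL V i u v) w := by
  obtain ⟨T0, h⟩ := borch W u v w 0 m n
  refine ⟨T0 + 1, fun T hT => ?_⟩
  obtain ⟨S, rfl⟩ : ∃ S, T = S + 1 := ⟨T - 1, by omega⟩
  have := h (S + 1) (by omega)
  rw [sum_l_zero] at this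
  simpa using this.symm

/-- The adjoint module. -/
@[reducible] def adj (V : VOA) : WeakModule V where
  carrier := V.carrier
  op := V.op
  op_linear_left := V.op_linear_left
  op_linear_right := V.op_linear_right
  trunc := V.trunc
  one_op := V.one_op
  borcherds := V.borcherds

theorem Lm1_eq (u : V.carrier) : V.op V.omega 0 u = V.op u (-2) V.one := by
  have := V.L_neg_one u (-1) V.one
  rw [V.create] at this
  simpa using this

theorem deriv (W : WeakModule V) (u : V.carrier) (n : ℤ) (w : W.carrier) :
    oL W n (vL V 0 V.omega u) w = (-(n : ℂ)) • oL W (n - 1) u w := by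
  rw [vL_apply, Lm1_eq]
  obtain ⟨T0, h⟩ := borch W u V.one w (-2) 0 n
  have := h (T0 + n.natAbs + 1) (by omega)
  rw [Finset.sum_range_succ', Finset.sum_eq_zero (by intro i _; simp [cc_zero_left])] at this
  simp only [cc_zero, zero_add, one_smul, CharP.cast_eq_zero, sub_zero, add_zero] at this
  rw [vL_apply] at this
  rw [this]
  simp only [oL_apply, W.one_op, cc_neg_two]
  rcases lt_trichotomy n 0 with hn | hn | hn
  · rw [Finset.sum_eq_single (-1 - n).toNat]
    · have e : (((-1 - n).toNat : ℕ) : ℤ) = -1 - n := by omega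
      have e' : (((-1 - n).toNat : ℕ) : ℂ) = -1 - n := by exact_mod_cast congrArg (Int.cast (R := ℂ)) e
      rw [e, e', if_pos (by ring), if_neg (by omega)]
      simp only [smul_zero, sub_zero]
      congr 1
      · ring
      · congr 1; ring
    · intro i _ hi
      rw [if_neg (by omega), if_neg (by omega), (W.op_linear_right _ _).map_zero]; simp
    · intro hi
      simp only [Finset.mem_range] at hi
      omega
  · subst hn
    rw [Finset.sum_eq_zero]
    · simp
    · intro i _
      rw [if_neg (by omega), if_neg (by omega), (W.op_linear_right _ _).map_zero]; simp
  · rw [Finset.sum_eq_single (n - 1).toNat]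
    · have e : (((n - 1).toNat : ℕ) : ℤ) = n - 1 := by omega
      have e' : (((n - 1).toNat : ℕ) : ℂ) = n - 1 := by exact_mod_cast congrArg (Int.cast (R := ℂ)) e
      rw [e, e', if_neg (by omega), if_pos (by ring), (W.op_linear_right _ _).map_zero]
      rw [zero_sub, smul_neg, neg_smul]
      congr 1
      have : ((-1 : ℂ)) ^ (-2 : ℤ) = 1 := by norm_num
      rw [this, one_smul]; congr 1; ring
    · intro i _ hi
      rw [if_neg (by omega), if_neg (by omega), (W.op_linear_right _ _).map_zero]; simp
    · intro hi
      simp only [Finset.mem_range] at hi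
      omega

theorem sum_c_one {E : Type*} [AddCommGroup E] [Module ℂ E] (T : ℕ) (f : ℕ → E) :
    ∑ i ∈ Finset.range (T + 2), cchoose 1 i • f i = f 0 + f 1 := by
  rw [Finset.sum_range_succ', Finset.sum_range_succ', Finset.sum_eq_zero]
  · simp [cchoose, add_comm]
  · intro i _
    have := cc_pascal 0 (i + 1)
    simp only [cc_zero_left, zero_add, add_zero] at this
    simp [this]

theorem cc_two_ge (i : ℕ) : cchoose 2 (i + 3) = 0 := by
  rw [show (2 : ℤ) = ((2 : ℕ) : ℤ) from rfl, cc_eq, Int.cast_natCast, Ring.choose_natCast]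
  simp [Nat.choose_eq_zero_of_lt]

theorem sum_c_two {E : Type*} [AddCommGroup E] [Module ℂ E] (T : ℕ) (f : ℕ → E) :
    ∑ i ∈ Finset.range (T + 3), cchoose 2 i • f i = f 0 + (2 : ℂ) • f 1 + f 2 := by
  rw [Finset.sum_range_succ', Finset.sum_range_succ', Finset.sum_range_succ', Finset.sum_eq_zero]
  · have h1 : cchoose 2 1 = 2 := by simp [cchoose]
    have h2 : cchoose 2 2 = 1 := by simp [cchoose, Finset.prod_range_succ]; norm_num
    simp only [zero_add, h1, h2, cc_zero, one_smul]
    simp; abel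
  · intro i _
    rw [cc_two_ge, zero_smul]

theorem L0_comm (W : WeakModule V) (k : ℤ) (u : V.carrier) (hu : u ∈ V.wtSpace k) (n : ℤ)
    (w : W.carrier) : oL W 1 V.omega (oL W n u w)
      = oL W n u (oL W 1 V.omega w) + ((k : ℂ) - n - 1) • oL W n u w := by
  obtain ⟨T0, h⟩ := comm W V.omega u w 1 n
  have := h (T0 + 2) (by omega)
  rw [sum_c_one] at this
  rw [sub_eq_iff_eq_add] at this
  rw [this]
  simp only [CharP.cast_eq_zero, Nat.cast_one, sub_zero, deriv]
  have h1 : vL V 1 V.omega u = (k : ℂ) • u := V.L_zero k u hu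
  rw [h1, map_smul, LinearMap.smul_apply, add_comm, ← add_smul]
  congr 1
  have : (1 : ℤ) + n - 1 = n := by ring
  rw [this]; congr 1; push_cast; ring

/-- `L(1)` on `V`. -/
abbrev L1 (V : VOA) : V.carrier →ₗ[ℂ] V.carrier := vL V 2 V.omega

theorem L1_comm (h : ℤ) (u : V.carrier) (hu : u ∈ V.wtSpace h) (n : ℤ) (w : V.carrier) :
    L1 V (vL V n u w) = vL V n (L1 V u) w + (2 * (h : ℂ) - n - 2) • vL V (n + 1) u w
      + vL V n u (L1 V w) := by
  obtain ⟨T0, hT⟩ := comm (adj V) V.omega u w 2 n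
  have := hT (T0 + 3) (by omega)
  rw [sum_c_two] at this
  have e1 : oL (adj V) (2 + n - (0 : ℕ)) (vL V (0 : ℕ) V.omega u) w
      = (-((n : ℂ) + 2)) • vL V (n + 1) u w := by
    rw [Nat.cast_zero, deriv]
    have : (2 : ℤ) + n - 0 - 1 = n + 1 := by ring
    rw [this]; push_cast; congr 1; ring
  have h1 : vL V (1 : ℕ) V.omega u = (h : ℂ) • u := V.L_zero h u hu
  have e2 : oL (adj V) (2 + n - (1 : ℕ)) (vL V (1 : ℕ) V.omega u) w
      = (h : ℂ) • vL V (n + 1) u w := by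
    rw [h1, map_smul, LinearMap.smul_apply]
    have : (2 : ℤ) + n - (1 : ℕ) = n + 1 := by push_cast; ring
    rw [this]; rfl
  have e3 : oL (adj V) (2 + n - (2 : ℕ)) (vL V (2 : ℕ) V.omega u) w = vL V n (L1 V u) w := by
    have : (2 : ℤ) + n - (2 : ℕ) = n := by push_cast; ring
    rw [this]; rfl
  rw [e1, e2, e3] at this
  have h2 : L1 V (vL V n u w) - vL V n u (L1 V w) = (-((n : ℂ) + 2)) • vL V (n + 1) u w
      + (2 : ℂ) • (h : ℂ) • vL V (n + 1) u w + vL V n (L1 V u) w := this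
  rw [sub_eq_iff_eq_add] at h2
  rw [h2]; module

theorem V_ind {P : V.carrier → Prop} (h0 : P 0) (hadd : ∀ a b, P a → P b → P (a + b))
    (hh : ∀ k, ∀ v ∈ V.wtSpace k, P v) (v : V.carrier) : P v := by
  rw [← V.proj_sum v, finsum_eq_sum _ (V.proj_finite v)]
  exact Finset.sum_induction _ P hadd h0 fun n _ => hh n _ (V.proj_mem n v)

end VAux
end

noncomputable section

namespace VAux

variable {V : VOA}

/-- Divided powers of `L(1)`. -/
def Ld (V : VOA) (i : ℕ) : V.carrier →ₗ[ℂ] V.carrier := ((Nat.factorial i : ℂ))⁻¹ • (L1 V) ^ i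

theorem Ld_zero (u : V.carrier) : Ld V 0 u = u := by simp [Ld]

theorem Ld_succ (i : ℕ) (u : V.carrier) : L1 V (Ld V i u) = ((i : ℂ) + 1) • Ld V (i + 1) u := by
  unfold Ld
  rw [LinearMap.smul_apply, LinearMap.smul_apply, map_smul, pow_succ', Module.End.mul_apply,
    smul_smul, Nat.factorial_succ]
  congr 1
  have h1 : ((i : ℂ) + 1) ≠ 0 := by exact_mod_cast Nat.succ_ne_zero i
  have h2 : (i.factorial : ℂ) ≠ 0 := by exact_mod_cast i.factorial_ne_zero
  push_cast
  field_simp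

theorem Ld_wt (h : ℤ) (u : V.carrier) (hu : u ∈ V.wtSpace h) (i : ℕ) :
    Ld V i u ∈ V.wtSpace (h - i) := by
  apply Submodule.smul_mem
  induction i with
  | zero => simpa using hu
  | succ i ih =>
    rw [pow_succ', Module.End.mul_apply]
    have := V.op_wt 2 (h - i) 2 _ V.omega_wt _ ih
    have e : 2 + (h - (i : ℤ)) - 2 - 1 = h - ((i + 1 : ℕ) : ℤ) := by push_cast; ring
    rw [e] at this
    exact this

theorem adsum {E : Type*} [AddCommGroup E] [Module ℂ E] (F : ℕ → ℕ → E) (t : ℕ) :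
    ((t : ℂ) + 1) • ∑ x ∈ ad (t + 1), F x.1 x.2
      = ∑ x ∈ ad t, (((x.1 : ℂ) + 1) • F (x.1 + 1) x.2 + ((x.2 : ℂ) + 1) • F x.1 (x.2 + 1)) := by
  have h1 : ((t : ℂ) + 1) • ∑ x ∈ ad (t + 1), F x.1 x.2
      = ∑ x ∈ ad (t + 1), (x.1 : ℂ) • F x.1 x.2 + ∑ x ∈ ad (t + 1), (x.2 : ℂ) • F x.1 x.2 := by
    rw [Finset.smul_sum, ← Finset.sum_add_distrib]
    refine Finset.sum_congr rfl fun x hx => ?_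
    rw [← add_smul]
    congr 1
    exact_mod_cast (Finset.HasAntidiagonal.mem_antidiagonal.1 hx).symm
  rw [h1, Finset.Nat.sum_antidiagonal_succ, Finset.Nat.sum_antidiagonal_succ',
    Finset.sum_add_distrib]
  simp

/-- The divided powers of `ad L(1)` applied to the mode `uₙ`, `u ∈ V₍ₕ₎`. -/
def Ap (h n : ℤ) (u : V.carrier) (p : ℕ) : V.carrier →ₗ[ℂ] V.carrier :=
  ∑ x ∈ ad p, cchoose (2 * h - n - 2 - x.1) x.2 • vL V (n + x.2) (Ld V x.1 u)

theorem shift_aux {E : Type*} [AddCommGroup E] [Module ℂ E] (X : ℤ) (U : ℕ → ℕ → E) (p : ℕ) :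
    ∑ x ∈ ad p, (((x.1 : ℂ) + 1) * (cchoose (X - x.1) x.2 - cchoose (X - x.1 - 1) x.2)) •
        U (x.1 + 1) x.2
      = ∑ x ∈ ad p, ((x.1 : ℂ) * cchoose (X - x.1) x.2) • U x.1 (x.2 + 1) := by
  cases p with
  | zero => simp [cc_zero]
  | succ p =>
    rw [Finset.Nat.sum_antidiagonal_succ', Finset.Nat.sum_antidiagonal_succ]
    simp only [cc_zero, sub_self, mul_zero, zero_smul, zero_add, Nat.cast_zero, zero_mul]
    refine Finset.sum_congr rfl fun x _ => ?_
    have := cc_pascal (X - x.1 - 1) x.2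
    rw [sub_add_cancel] at this
    rw [this, add_sub_cancel_right]
    congr 1
    push_cast
    rw [sub_sub]

theorem Ap_comm (h n : ℤ) (u : V.carrier) (hu : u ∈ V.wtSpace h) (p : ℕ) (w : V.carrier) :
    L1 V (Ap h n u p w) = ((p : ℂ) + 1) • Ap h n u (p + 1) w + Ap h n u p (L1 V w) := by
  have e : ∀ p w, Ap h n u p w = ∑ x ∈ ad p, cchoose (2 * h - n - 2 - x.1) x.2 •
      vL V (n + x.2) (Ld V x.1 u) w := by
    intro p w; simp [Ap]
  rw [e, e, e, adsum (fun a s => cchoose (2 * h - n - 2 - a) s • vL V (n + s) (Ld V a u) w) p]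
  rw [map_sum]
  have s := shift_aux (2 * h - n - 2) (fun a s => vL V (n + s) (Ld V a u) w) p
  rw [← sub_eq_zero, ← Finset.sum_sub_distrib] at s
  rw [← sub_eq_zero, ← s, ← Finset.sum_add_distrib, ← Finset.sum_sub_distrib]
  refine Finset.sum_congr rfl fun x _ => ?_
  rw [map_smul, L1_comm (h - x.1) _ (Ld_wt h u hu _), Ld_succ, map_smul, LinearMap.smul_apply]
  have c := cc_succ (2 * h - n - 2 - x.1) x.2
  have i1 : n + (x.2 : ℤ) + 1 = n + ((x.2 + 1 : ℕ) : ℤ) := by push_cast; ring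
  have i2 : 2 * h - n - 2 - ((x.1 + 1 : ℕ) : ℤ) = 2 * h - n - 2 - x.1 - 1 := by push_cast; ring
  rw [i1, i2, smul_smul ((x.2 : ℂ) + 1), c]
  push_cast
  module

theorem Ld_op (h n : ℤ) (u : V.carrier) (hu : u ∈ V.wtSpace h) (v : V.carrier) (t : ℕ) :
    Ld V t (vL V n u v) = ∑ x ∈ ad t, Ap h n u x.1 (Ld V x.2 v) := by
  induction t with
  | zero => simp [Ld_zero, Ap, cc_zero]
  | succ t ih =>
    have h1 : ((t : ℂ) + 1) ≠ 0 := by exact_mod_cast Nat.succ_ne_zero t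
    apply smul_right_injective _ h1
    simp only
    rw [← Ld_succ, ih, adsum (fun p b => Ap h n u p (Ld V b v)), map_sum]
    refine Finset.sum_congr rfl fun x _ => ?_
    rw [Ap_comm h n u hu, Ld_succ, map_smul]

end VAux
end

noncomputable section

namespace VAux

variable {V : VOA}

/-- A bound for the order of nilpotency of `L(1)` on `V₍ₕ₎`. -/
def Kb (V : VOA) (h : ℤ) : ℕ := (h - Classical.choose V.lower_trunc).toNat + 1

theorem Ld_van (h : ℤ) (u : V.carrier) (hu : u ∈ V.wtSpace h) (i : ℕ) (hi : Kb V h ≤ i) :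
    Ld V i u = 0 := by
  have h1 := Ld_wt h u hu i
  rw [Classical.choose_spec V.lower_trunc (h - i) (by unfold Kb at hi; omega)] at h1
  simpa using h1

/-- Adjoint modes, on homogeneous vectors of weight `h`. -/
def thH (W : WeakModule V) (h n : ℤ) : V.carrier →ₗ[ℂ] W.carrier →ₗ[ℂ] W.carrier :=
  ((-1 : ℂ) ^ h) • ∑ i ∈ Finset.range (Kb V h), (oL W (2 * h - n - i - 2)) ∘ₗ Ld V i

/-- Adjoint modes. -/
def th (W : WeakModule V) (n : ℤ) (v : V.carrier) : W.carrier →ₗ[ℂ] W.carrier :=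
  ∑ᶠ h : ℤ, thH W h n (V.proj h v)

theorem th_supp (W : WeakModule V) (n : ℤ) (v : V.carrier) :
    (Function.support fun h : ℤ => thH W h n (V.proj h v)).Finite := by
  refine (V.proj_finite v).subset fun h hh => ?_
  simp only [Function.mem_support] at hh ⊢
  intro h0
  apply hh
  rw [h0, map_zero]

theorem th_add (W : WeakModule V) (n : ℤ) (v v' : V.carrier) :
    th W n (v + v') = th W n v + th W n v' := by
  unfold th
  rw [← finsum_add_distrib (th_supp W n v) (th_supp W n v')]
  congr 1; ext1 h
  rw [(V.proj_linear h).map_add, map_add]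

theorem th_smul (W : WeakModule V) (n : ℤ) (c : ℂ) (v : V.carrier) :
    th W n (c • v) = c • th W n v := by
  unfold th
  rw [smul_finsum' c (th_supp W n v)]
  congr 1; ext1 h
  rw [(V.proj_linear h).map_smul, map_smul]

/-- Adjoint modes, linear version. -/
def thL (W : WeakModule V) (n : ℤ) : V.carrier →ₗ[ℂ] W.carrier →ₗ[ℂ] W.carrier where
  toFun := th W n
  map_add' := th_add W n
  map_smul' := th_smul W n

theorem th_hom (W : WeakModule V) (n h : ℤ) (v : V.carrier) (hv : v ∈ V.wtSpace h) (T : ℕ)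
    (hT : ∀ i, T ≤ i → Ld V i v = 0) (w : W.carrier) :
    thL W n v w = ((-1 : ℂ) ^ h) • ∑ i ∈ Finset.range T, oL W (2 * h - n - i - 2) (Ld V i v) w := by
  have h1 : th W n v = thH W h n v := by
    unfold th
    rw [finsum_eq_single _ h, V.proj_eq h v hv]
    intro g hg
    rw [V.proj_ne h g (Ne.symm hg) v hv, map_zero]
  change th W n v w = _
  rw [h1]
  simp only [thH, LinearMap.smul_apply, LinearMap.sum_apply, LinearMap.comp_apply]
  congr 1
  rw [← finsum_range (fun i : ℕ => oL W (2 * h - n - i - 2) (Ld V i v) w), finsum_range _ T]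
  · intro i hi
    simp only [hT i hi, map_zero, LinearMap.zero_apply]
  · intro i hi
    simp only [Ld_van h v hv i hi, map_zero, LinearMap.zero_apply]

theorem th_prod (W : WeakModule V) (h k l m n : ℤ) (u v : V.carrier) (hu : u ∈ V.wtSpace h)
    (hv : v ∈ V.wtSpace k) (w : W.carrier) (T : ℕ)
    (hZ : ∀ a b j : ℕ, T ≤ a + b + j → vL V (l + j) (Ld V a u) (Ld V b v) = 0) (i : ℕ) :
    thL W (m + n - i) (vL V (l + i) u v) w
      = ((-1 : ℂ) ^ (h + k - l - 1) * (-1) ^ i) •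
        ∑ a ∈ Finset.range T, ∑ b ∈ Finset.range T, ∑ s ∈ Finset.range T,
          cchoose (2 * h - l - 2 - a - i) s •
            oL W ((2 * h - l - 2 - a - m) + (2 * k - l - n - 2 - b) - (i + s : ℕ))
              (vL V (l + (i + s : ℕ)) (Ld V a u) (Ld V b v)) w := by
  have hL : ∀ t, Ld V t (vL V (l + i) u v) = ∑ x ∈ ad t, ∑ y ∈ ad x.1,
      cchoose (2 * h - l - 2 - y.1 - i) y.2 • vL V (l + (i + y.2 : ℕ)) (Ld V y.1 u) (Ld V x.2 v) := by
    intro t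
    rw [Ld_op h _ u hu]
    refine Finset.sum_congr rfl fun x _ => ?_
    simp only [Ap, LinearMap.sum_apply, LinearMap.smul_apply]
    refine Finset.sum_congr rfl fun y _ => ?_
    have e1 : 2 * h - (l + (i : ℤ)) - 2 - y.1 = 2 * h - l - 2 - y.1 - i := by ring
    have e2 : l + (i : ℤ) + y.2 = l + (i + y.2 : ℕ) := by push_cast; ring
    rw [e1, e2]
  have hwt : vL V (l + i) u v ∈ V.wtSpace (h + k - (l + i) - 1) := V.op_wt h k _ u hu v hv
  rw [th_hom W _ _ _ hwt T]
  · have sg : ((-1 : ℂ) ^ (h + k - l - 1) * (-1) ^ i) = (-1) ^ (h + k - (l + i) - 1) := by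
      have : h + k - (l + (i : ℤ)) - 1 = (h + k - l - 1) - i := by ring
      rw [this, zpow_sub₀ (by norm_num : (-1 : ℂ) ≠ 0) (h + k - l - 1) (i : ℤ), zpow_natCast,
        div_eq_mul_inv, ← inv_pow]
      norm_num
    rw [sg]
    congr 1
    have step : ∀ t ∈ Finset.range T,
        oL W (2 * (h + k - (l + i) - 1) - (m + n - i) - t - 2) (Ld V t (vL V (l + i) u v)) w
        = ∑ x ∈ ad t, (fun p b : ℕ => ∑ y ∈ ad p, (fun a s : ℕ =>
          cchoose (2 * h - l - 2 - a - i) s •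
            oL W ((2 * h - l - 2 - a - m) + (2 * k - l - n - 2 - b) - (i + s : ℕ))
              (vL V (l + (i + s : ℕ)) (Ld V a u) (Ld V b v)) w) y.1 y.2) x.1 x.2 := by
      intro t _
      rw [hL]
      simp only [map_sum, LinearMap.sum_apply, map_smul, LinearMap.smul_apply]
      refine Finset.sum_congr rfl fun x hx => Finset.sum_congr rfl fun y hy => ?_
      have hx' := Finset.HasAntidiagonal.mem_antidiagonal.1 hx
      have hy' := Finset.HasAntidiagonal.mem_antidiagonal.1 hy
      congr 2
      congr 2
      rw [← hx', ← hy']; push_cast; ring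
    refine (Finset.sum_congr rfl step).trans ((box T (fun p b : ℕ => ∑ y ∈ ad p, (fun a s : ℕ =>
          cchoose (2 * h - l - 2 - a - i) s •
            oL W ((2 * h - l - 2 - a - m) + (2 * k - l - n - 2 - b) - (i + s : ℕ))
              (vL V (l + (i + s : ℕ)) (Ld V a u) (Ld V b v)) w) y.1 y.2) ?_).trans ?_)
    · intro p b hpb
      refine Finset.sum_eq_zero fun y hy => ?_
      have hy' := Finset.HasAntidiagonal.mem_antidiagonal.1 hy
      simp only [hZ y.1 b (i + y.2) (by omega), map_zero, LinearMap.zero_apply, smul_zero]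
    · rw [Finset.sum_comm]
      rw [Finset.sum_comm (s := Finset.range T) (t := Finset.range T)
        (f := fun a b => ∑ s ∈ Finset.range T, cchoose (2 * h - l - 2 - a - i) s •
            oL W ((2 * h - l - 2 - a - m) + (2 * k - l - n - 2 - b) - (i + s : ℕ))
              (vL V (l + (i + s : ℕ)) (Ld V a u) (Ld V b v)) w)]
      refine Finset.sum_congr rfl fun b _ => ?_
      refine (box T (fun a s : ℕ => cchoose (2 * h - l - 2 - a - i) s •
            oL W ((2 * h - l - 2 - a - m) + (2 * k - l - n - 2 - b) - (i + s : ℕ))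
              (vL V (l + (i + s : ℕ)) (Ld V a u) (Ld V b v)) w) ?_)
      intro a s has
      simp only [hZ a b (i + s) (by omega), map_zero, LinearMap.zero_apply, smul_zero]
  · intro t ht
    rw [hL]
    refine Finset.sum_eq_zero fun x hx => Finset.sum_eq_zero fun y hy => ?_
    have hx' := Finset.HasAntidiagonal.mem_antidiagonal.1 hx
    have hy' := Finset.HasAntidiagonal.mem_antidiagonal.1 hy
    rw [hZ y.1 x.2 (i + y.2) (by omega), smul_zero]

theorem th_lhs (W : WeakModule V) (h k l m n : ℤ) (u v : V.carrier) (hu : u ∈ V.wtSpace h)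
    (hv : v ∈ V.wtSpace k) (w : W.carrier) (T : ℕ)
    (hZ : ∀ a b j : ℕ, T ≤ a + b + j → vL V (l + j) (Ld V a u) (Ld V b v) = 0) :
    ∑ i ∈ Finset.range T, cchoose m i • thL W (m + n - i) (vL V (l + i) u v) w
      = ((-1 : ℂ) ^ (h + k - l - 1)) •
        ∑ a ∈ Finset.range T, ∑ b ∈ Finset.range T, ∑ r ∈ Finset.range T,
          cchoose (2 * h - l - 2 - a - m) r •
            oL W ((2 * h - l - 2 - a - m) + (2 * k - l - n - 2 - b) - r)
              (vL V (l + r) (Ld V a u) (Ld V b v)) w := by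
  rw [Finset.sum_congr rfl fun i _ => by rw [th_prod W h k l m n u v hu hv w T hZ i]]
  have e : ∀ a b : ℕ, ∑ r ∈ Finset.range T, cchoose (2 * h - l - 2 - a - m) r •
            oL W ((2 * h - l - 2 - a - m) + (2 * k - l - n - 2 - b) - r)
              (vL V (l + r) (Ld V a u) (Ld V b v)) w
      = ∑ i ∈ Finset.range T, ∑ s ∈ Finset.range T,
        ((-1 : ℂ) ^ i * cchoose m i * cchoose (2 * h - l - 2 - a - i) s) •
            oL W ((2 * h - l - 2 - a - m) + (2 * k - l - n - 2 - b) - (i + s : ℕ))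
              (vL V (l + (i + s : ℕ)) (Ld V a u) (Ld V b v)) w := by
    intro a b
    rw [← box T (fun i s => ((-1 : ℂ) ^ i * cchoose m i * cchoose (2 * h - l - 2 - a - i) s) •
            oL W ((2 * h - l - 2 - a - m) + (2 * k - l - n - 2 - b) - (i + s : ℕ))
              (vL V (l + (i + s : ℕ)) (Ld V a u) (Ld V b v)) w)]
    · refine Finset.sum_congr rfl fun r _ => ?_
      rw [← cc_vander, Finset.sum_smul]
      refine Finset.sum_congr rfl fun x hx => ?_
      rw [Finset.HasAntidiagonal.mem_antidiagonal.1 hx]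
    · intro i s his
      simp only [hZ a b (i + s) (by omega), map_zero, LinearMap.zero_apply, smul_zero]
  simp only [e]
  rw [Finset.smul_sum]
  simp only [Finset.smul_sum, smul_smul]
  rw [Finset.sum_comm]
  refine Finset.sum_congr rfl fun a _ => ?_
  rw [Finset.sum_comm]
  refine Finset.sum_congr rfl fun b _ => Finset.sum_congr rfl fun i _ =>
    Finset.sum_congr rfl fun s _ => ?_
  congr 1
  ring

theorem th_borch (W : WeakModule V) (h k : ℤ) (u v : V.carrier) (hu : u ∈ V.wtSpace h)
    (hv : v ∈ V.wtSpace k) (w : W.carrier) (l m n : ℤ) :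
    ∃ T0 : ℕ, ∀ T : ℕ, T0 ≤ T →
      ∑ i ∈ Finset.range T, cchoose m i • thL W (m + n - i) (vL V (l + i) u v) w
      = ∑ i ∈ Finset.range T, ((-1 : ℂ) ^ i * cchoose l i) •
          (thL W (n + i) v (thL W (l + m - i) u w)
            - ((-1 : ℂ) ^ l) • thL W (m + i) u (thL W (l + n - i) v w)) := by
  set K := Kb V h + Kb V k with hK
  have hKu : ∀ a, K ≤ a → Ld V a u = 0 := fun a ha => Ld_van h u hu a (by omega)
  have hKv : ∀ a, K ≤ a → Ld V a v = 0 := fun a ha => Ld_van k v hv a (by omega)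
  choose R hR using fun a b : ℕ => v_trunc (Ld V a u) (Ld V b v) l
  choose S hS using fun a b : ℕ => borch W (Ld V a u) (Ld V b v) w l
    (2 * h - l - 2 - a - m) (2 * k - l - n - 2 - b)
  have bd : ∀ f : ℕ → ℕ → ℕ, ∀ a b, a < K → b < K →
      f a b ≤ ∑ a ∈ Finset.range K, ∑ b ∈ Finset.range K, f a b := by
    intro f a b ha hb
    exact (Finset.single_le_sum (f := fun b => f a b) (fun _ _ => Nat.zero_le _)
      (Finset.mem_range.2 hb)).trans (Finset.single_le_sum
        (f := fun a => ∑ b ∈ Finset.range K, f a b) (fun _ _ => Nat.zero_le _)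
        (Finset.mem_range.2 ha))
  refine ⟨2 * K + (∑ a ∈ Finset.range K, ∑ b ∈ Finset.range K, R a b)
    + (∑ a ∈ Finset.range K, ∑ b ∈ Finset.range K, S a b), fun T hT => ?_⟩
  have hZ : ∀ a b j : ℕ, T ≤ a + b + j → vL V (l + j) (Ld V a u) (Ld V b v) = 0 := by
    intro a b j hj
    by_cases ha : K ≤ a
    · rw [hKu a ha, map_zero, LinearMap.zero_apply]
    by_cases hb : K ≤ b
    · rw [hKv b hb, map_zero]
    have := bd R a b (by omega) (by omega)
    exact hR a b j (by omega)
  rw [th_lhs W h k l m n u v hu hv w T hZ]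
  have key : ∀ a ∈ Finset.range T, ∀ b ∈ Finset.range T, ∑ r ∈ Finset.range T,
          cchoose (2 * h - l - 2 - a - m) r •
            oL W ((2 * h - l - 2 - a - m) + (2 * k - l - n - 2 - b) - r)
              (vL V (l + r) (Ld V a u) (Ld V b v)) w
      = ∑ i ∈ Finset.range T, ((-1 : ℂ) ^ i * cchoose l i) •
          (oL W (2 * h - (m + i) - a - 2) (Ld V a u)
            (oL W (2 * k - (l + n - i) - b - 2) (Ld V b v) w)
            - ((-1 : ℂ) ^ l) • oL W (2 * k - (n + i) - b - 2) (Ld V b v)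
              (oL W (2 * h - (l + m - i) - a - 2) (Ld V a u) w)) := by
    intro a _ b _
    by_cases ha : K ≤ a
    · simp [hKu a ha]
    by_cases hb : K ≤ b
    · simp [hKv b hb]
    have := bd S a b (by omega) (by omega)
    rw [hS a b T (by omega)]
    refine Finset.sum_congr rfl fun i _ => ?_
    have e1 : l + (2 * h - l - 2 - a - m) - i = 2 * h - (m + i) - a - 2 := by ring
    have e2 : (2 * k - l - n - 2 - b) + i = 2 * k - (l + n - i) - b - 2 := by ring
    have e3 : l + (2 * k - l - n - 2 - b) - i = 2 * k - (n + i) - b - 2 := by ring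
    have e4 : (2 * h - l - 2 - a - m) + i = 2 * h - (l + m - i) - a - 2 := by ring
    rw [e1, e2, e3, e4]
  rw [Finset.sum_congr rfl fun a ha => Finset.sum_congr rfl fun b hb => key a ha b hb]
  have hu' : ∀ i, T ≤ i → Ld V i u = 0 := fun i hi => hKu i (by omega)
  have hv' : ∀ i, T ≤ i → Ld V i v = 0 := fun i hi => hKv i (by omega)
  have hthu : ∀ (n : ℤ) w, thL W n u w = _ := fun n w => th_hom W n h u hu T hu' w
  have hthv : ∀ (n : ℤ) w, thL W n v w = _ := fun n w => th_hom W n k v hv T hv' w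
  have sg : ((-1 : ℂ) ^ (h + k - l - 1)) = - ((-1) ^ h * (-1) ^ k * (-1) ^ l) := by
    rw [zpow_sub₀ (by norm_num), zpow_sub₀ (by norm_num), zpow_add₀ (by norm_num)]
    have : ((-1 : ℂ) ^ l)⁻¹ = (-1) ^ l := by rw [← inv_zpow]; norm_num
    rw [div_eq_mul_inv _ ((-1 : ℂ) ^ l), this, zpow_one, div_neg, div_one]
  have sq : ((-1 : ℂ) ^ l) * (-1) ^ l = 1 := by rw [← mul_zpow]; norm_num
  rw [sg]
  simp only [hthu, hthv, map_sum, map_smul, Finset.smul_sum, LinearMap.sum_apply,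
    LinearMap.smul_apply]
  rw [Finset.sum_congr rfl fun a _ => Finset.sum_comm, Finset.sum_comm]
  refine Finset.sum_congr rfl fun i _ => ?_
  rw [Finset.sum_comm (s := Finset.range T) (t := Finset.range T)
    (f := fun b a => (-1 : ℂ) ^ k • (-1 : ℂ) ^ h • oL W (2 * k - (n + i) - b - 2) (Ld V b v)
              (oL W (2 * h - (l + m - i) - a - 2) (Ld V a u) w))]
  rw [← Finset.sum_sub_distrib, Finset.smul_sum]
  refine Finset.sum_congr rfl fun a _ => ?_
  rw [← Finset.sum_sub_distrib, Finset.smul_sum]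
  refine Finset.sum_congr rfl fun b _ => ?_
  generalize (-1 : ℂ) ^ l = e at sq
  rw [show ∀ P Q : W.carrier, ∀ c x y : ℂ, (-(x * y * e)) • c • (P - e • Q)
    = c • (y • x • Q - e • x • y • P) from ?_]
  intro P Q c x y
  have : (-(x * y * e)) • c • (P - e • Q) = c • ((y * x * (e * e)) • Q - e • x • y • P) := by
    module
  rw [this, sq, mul_one, mul_smul]

end VAux
end

noncomputable section

namespace VAux

variable {V : VOA}

theorem Ld_of_L1 (u : V.carrier) (hu : L1 V u = 0) : ∀ i : ℕ, 1 ≤ i → Ld V i u = 0 := by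
  intro i hi
  induction i, hi using Nat.le_induction with
  | base =>
    have := Ld_succ (V := V) 0 u
    simpa [Ld_zero, hu] using this.symm
  | succ n hn ih =>
    have := Ld_succ (V := V) n u
    rw [ih, map_zero] at this
    have h2 : ((n : ℂ) + 1) ≠ 0 := by exact_mod_cast Nat.succ_ne_zero n
    exact (smul_eq_zero.1 this.symm).resolve_left h2

theorem L1_one : L1 V V.one = 0 := V.create_nonneg _ _ (by norm_num)

theorem L1_omega : L1 V V.omega = 0 := by
  have h := V.virasoro 1 (-2) V.one
  norm_num at h
  rw [V.create, V.create_nonneg _ _ (le_refl 0), V.create_nonneg _ 2 (by norm_num)] at h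
  rw [(V.op_linear_right V.omega (-1)).map_zero] at h
  have h2 : V.op V.omega 2 V.omega = 0 := by simpa using h
  exact h2

theorem thL_one (W : WeakModule V) (n : ℤ) (w : W.carrier) :
    thL W n V.one w = if n = -1 then w else 0 := by
  rw [th_hom W n 0 V.one V.one_wt 1 (Ld_of_L1 _ L1_one)]
  simp only [zpow_zero, one_smul, Finset.sum_range_one, Ld_zero, oL_apply, W.one_op]
  norm_num
  congr 1
  apply propext; constructor <;> intro h <;> omega

theorem thL_omega (W : WeakModule V) (w : W.carrier) :
    thL W 1 V.omega w = W.op V.omega 1 w := by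
  rw [th_hom W 1 2 V.omega V.omega_wt 1 (Ld_of_L1 _ L1_omega)]
  simp only [Finset.sum_range_one, Ld_zero, oL_apply]
  norm_num

theorem th_borch_all (W : WeakModule V) (u v : V.carrier) (w : W.carrier) (l m n : ℤ) :
    ∃ T0 : ℕ, ∀ T : ℕ, T0 ≤ T →
      ∑ i ∈ Finset.range T, cchoose m i • thL W (m + n - i) (vL V (l + i) u v) w
      = ∑ i ∈ Finset.range T, ((-1 : ℂ) ^ i * cchoose l i) •
          (thL W (n + i) v (thL W (l + m - i) u w)
            - ((-1 : ℂ) ^ l) • thL W (m + i) u (thL W (l + n - i) v w)) := by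
  induction u using V_ind with
  | h0 => exact ⟨0, fun T _ => by simp⟩
  | hadd a b ha hb =>
    obtain ⟨A, hA⟩ := ha
    obtain ⟨B, hB⟩ := hb
    refine ⟨A + B, fun T hT => ?_⟩
    have h1 := hA T (by omega)
    have h2 := hB T (by omega)
    simp only [map_add, LinearMap.add_apply, smul_add, Finset.sum_add_distrib]
    rw [h1, h2, ← Finset.sum_add_distrib]
    refine Finset.sum_congr rfl fun i _ => ?_
    module
  | hh h u hu =>
    induction v using V_ind with
    | h0 => exact ⟨0, fun T _ => by simp⟩
    | hadd a b ha hb =>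
      obtain ⟨A, hA⟩ := ha
      obtain ⟨B, hB⟩ := hb
      refine ⟨A + B, fun T hT => ?_⟩
      have h1 := hA T (by omega)
      have h2 := hB T (by omega)
      simp only [map_add, LinearMap.add_apply, smul_add, Finset.sum_add_distrib]
      rw [h1, h2, ← Finset.sum_add_distrib]
      refine Finset.sum_congr rfl fun i _ => ?_
      module
    | hh k v hv => exact th_borch W h k u v hu hv w l m n

/-- The space `D(W)`. -/
def Dsub (W : WeakModule V) : Submodule ℂ (Module.Dual ℂ W.carrier) where
  carrier := {α | ∀ v : V.carrier, ∃ N : ℤ, ∀ n : ℤ, N ≤ n → α ∘ₗ thL W n v = 0}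
  zero_mem' := fun v => ⟨0, fun n _ => by simp⟩
  add_mem' := by
    intro α β ha hb v
    obtain ⟨A, hA⟩ := ha v
    obtain ⟨B, hB⟩ := hb v
    exact ⟨max A B, fun n hn => by
      rw [LinearMap.add_comp, hA n (le_trans (le_max_left _ _) hn),
        hB n (le_trans (le_max_right _ _) hn), add_zero]⟩
  smul_mem' := by
    intro c α ha v
    obtain ⟨A, hA⟩ := ha v
    exact ⟨A, fun n hn => by rw [LinearMap.smul_comp, hA n hn, smul_zero]⟩

theorem Dsub_stable (W : WeakModule V) (α : Module.Dual ℂ W.carrier) (ha : α ∈ Dsub W)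
    (u : V.carrier) (m : ℤ) : α ∘ₗ thL W m u ∈ Dsub W := by
  intro v
  obtain ⟨A, hA⟩ := v_trunc v u 0
  choose N hN using fun i : ℕ => ha (vL V (0 + i) v u)
  obtain ⟨N1, hN1⟩ := ha v
  refine ⟨max N1 (∑ i ∈ Finset.range A, |N i - m + i|), fun n hn => ?_⟩
  have hn1 : N1 ≤ n := le_trans (le_max_left _ _) hn
  have hn2 := le_trans (le_max_right _ _) hn
  ext w
  obtain ⟨T0, hT⟩ := th_borch_all W v u w 0 n m
  have h := congrArg α (hT (T0 + A + 1) (by omega))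
  rw [sum_l_zero] at h
  simp only [map_sum, map_smul, map_sub, zpow_zero, one_smul, zero_add, Nat.cast_zero, sub_zero,
    add_zero] at h
  rw [Finset.sum_eq_zero] at h
  · have h3 : α (thL W n v (thL W m u w)) = 0 := by
      have := hN1 n hn1
      exact LinearMap.congr_fun this _
    have h4 : α (thL W m u (thL W n v w)) = 0 := by
      linear_combination h3 - h
    simpa using h4
  · intro i _
    by_cases hi : i < A
    · have h5 := Finset.single_le_sum (f := fun i : ℕ => |N i - m + i|) (fun _ _ => abs_nonneg _)
        (Finset.mem_range.2 hi)
      have h6 := le_abs_self (N i - m + i)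
      have h7 := hN i (n + m - i) (by linarith)
      have h8 := LinearMap.congr_fun h7 w
      simp only [LinearMap.comp_apply, zero_add, LinearMap.zero_apply] at h8
      rw [h8, smul_zero]
    · have := hA i (by omega)
      rw [zero_add] at this
      rw [this]; simp

/-- `D(W)` as a weak module. -/
def DM (W : WeakModule V) : WeakModule V where
  carrier := Dsub W
  op := fun v n α => ⟨α.1 ∘ₗ thL W n v, Dsub_stable W α.1 α.2 v n⟩
  op_linear_left := fun n α => by
    constructor
    · intro a b; ext w; simp
    · intro c a; ext w; simp
  op_linear_right := fun u n => by
    constructor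
    · intro a b; ext w; simp
    · intro c a; ext w; simp
  trunc := fun u α => by
    obtain ⟨N, hN⟩ := α.2 u
    exact ⟨N, fun n hn => Subtype.ext (hN n hn)⟩
  one_op := fun n α => by
    ext w
    simp only [LinearMap.comp_apply, thL_one]
    split_ifs <;> simp
  borcherds := fun u v α l m n => by
    obtain ⟨A, hA⟩ := v_trunc u v l
    obtain ⟨N1, hN1⟩ := α.2 u
    obtain ⟨N2, hN2⟩ := α.2 v
    set B := A + (N1 - m).toNat + (N2 - n).toNat with hB
    rw [finsum_range _ B, finsum_range _ B]
    · ext w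
      obtain ⟨T0, hT⟩ := th_borch_all W u v w l m n
      have h := congrArg α.1 (hT (T0 + B) (by omega))
      have e1 : ∀ (f : ℕ → W.carrier), (∀ i, B ≤ i → α.1 (f i) = 0) →
          α.1 (∑ i ∈ Finset.range (T0 + B), f i) = ∑ i ∈ Finset.range B, α.1 (f i) := by
        intro f hf
        rw [map_sum, ← finsum_range (fun i => α.1 (f i)), finsum_range _ B hf]
        intro i hi; exact hf i (by omega)
      rw [e1, e1] at h
      · simp only [AddSubmonoidClass.coe_finsetSum, Submodule.coe_smul, LinearMap.sum_apply,
          LinearMap.smul_apply, LinearMap.comp_apply, AddSubgroupClass.coe_sub,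
          LinearMap.sub_apply]
        simp only [map_smul, map_sub, vL_apply] at h
        exact h
      · intro i hi
        have h1 := LinearMap.congr_fun (hN1 (m + i) (by omega)) (thL W (l + n - i) v w)
        have h2 := LinearMap.congr_fun (hN2 (n + i) (by omega)) (thL W (l + m - i) u w)
        simp only [LinearMap.comp_apply, LinearMap.zero_apply] at h1 h2
        simp [h1, h2]
      · intro i hi
        simp [hA i (by omega)]
    · intro i hi
      have h1 := hN1 (m + i) (by omega)
      have h2 := hN2 (n + i) (by omega)
      ext w
      simp [h1, h2]
    · intro i hi
      have := hA i (by omega)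
      rw [vL_apply] at this
      ext w
      simp [this]

/-- The inclusion `D(W) ⊆ W*`. -/
def DMv (W : WeakModule V) : (DM W).carrier →ₗ[ℂ] Module.Dual ℂ W.carrier :=
  (Dsub W).subtype

theorem DMv_op (W : WeakModule V) (v : V.carrier) (n : ℤ) (α : (DM W).carrier) :
    DMv W ((DM W).op v n α) = DMv W α ∘ₗ thL W n v := rfl

theorem DMv_surj (W : WeakModule V) (α : Module.Dual ℂ W.carrier) (h : α ∈ Dsub W) :
    ∃ β : (DM W).carrier, DMv W β = α := ⟨⟨α, h⟩, rfl⟩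

theorem mem_eig (W : WeakModule V) (h : ℂ) (w : W.carrier) :
    w ∈ W.eig h ↔ W.op V.omega 1 w = h • w := by
  unfold WeakModule.eig
  rw [LinearMap.mem_ker, LinearMap.sub_apply, LinearMap.smul_apply, LinearMap.id_apply,
    sub_eq_zero]
  rfl

theorem DM_eig (W : WeakModule V) (h : ℂ) (α : (DM W).carrier) (hα : α ∈ (DM W).eig h)
    (w : W.carrier) : DMv W α (W.op V.omega 1 w) = h * DMv W α w := by
  have h1 := (mem_eig _ _ _).1 hα
  have h2 := LinearMap.congr_fun (congrArg (DMv W) h1) w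
  rw [DMv_op, LinearMap.comp_apply, thL_omega] at h2
  rw [h2, map_smul]; rfl

end VAux
end

noncomputable section

namespace VAux

variable {V : VOA}

theorem W_ind (W : GenModule V) {P : W.carrier → Prop} (h0 : P 0)
    (hadd : ∀ a b, P a → P b → P (a + b))
    (hh : ∀ h, ∀ w ∈ W.wt h, P w) (w : W.carrier) : P w := by
  rw [← W.projW_sum w, finsum_eq_sum _ (W.projW_finite w)]
  exact Finset.sum_induction _ P hadd h0 fun n _ => hh n _ (W.projW_mem n w)

/-- Weight projections as linear maps. -/
def pL (W : GenModule V) (g : ℂ) : W.carrier →ₗ[ℂ] W.carrier := IsLinearMap.mk' _ (W.projW_linear g)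

theorem pL_apply (W : GenModule V) (g : ℂ) (w : W.carrier) : pL W g w = W.projW g w := rfl

theorem C2_neg (W : WeakModule V) (n : ℕ) (v : V.carrier) (w : W.carrier) :
    oL W (-(n + 2 : ℕ)) v w ∈ W.Cn 2 := by
  induction n generalizing v with
  | zero => exact Submodule.subset_span ⟨v, w, rfl⟩
  | succ n ih =>
    have h1 := ih (vL V 0 V.omega v)
    rw [deriv] at h1
    have h2 : (-((-(n + 2 : ℕ) : ℤ) : ℂ)) ≠ 0 := by
      push_cast
      rw [neg_neg]
      exact_mod_cast Nat.succ_ne_zero (n + 1)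
    have h3 := ((W.Cn 2).smul_mem_iff h2).1 h1
    have e : (-(n + 2 : ℕ) : ℤ) - 1 = -((n + 1 + 2 : ℕ) : ℤ) := by push_cast; ring
    rwa [e] at h3

theorem C2_le (W : WeakModule V) (n : ℤ) (hn : n ≤ -2) (v : V.carrier) (w : W.carrier) :
    oL W n v w ∈ W.Cn 2 := by
  have := C2_neg W (-n - 2).toNat v w
  have e : -(((-n - 2).toNat + 2 : ℕ) : ℤ) = n := by omega
  rwa [e] at this

theorem dual_mem (W : WeakModule V) (α : Module.Dual ℂ W.carrier)
    (h : ∀ x ∈ W.Cn 2, α x = 0) : α ∈ Dsub W := by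
  intro v
  induction v using V_ind with
  | h0 => exact ⟨0, fun n _ => by simp⟩
  | hadd a b ha hb =>
    obtain ⟨A, hA⟩ := ha
    obtain ⟨B, hB⟩ := hb
    exact ⟨max A B, fun n hn => by
      rw [map_add, LinearMap.comp_add, hA n (le_trans (le_max_left _ _) hn),
        hB n (le_trans (le_max_right _ _) hn), add_zero]⟩
  | hh k v hv =>
    refine ⟨2 * k, fun n hn => ?_⟩
    ext w
    rw [LinearMap.comp_apply, th_hom W n k v hv (Kb V k) (Ld_van k v hv), map_smul, map_sum,
      Finset.sum_eq_zero, smul_zero]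
    · rfl
    · intro i _
      exact h _ (C2_le W _ (by omega) _ _)

theorem fin_supp (hV : V.classA) (W : GenModule V) (α : Module.Dual ℂ W.carrier)
    (ha : α ∈ Dsub W.toWeakModule) : {g : ℂ | ∃ w ∈ W.wt g, α w ≠ 0}.Finite := by
  obtain ⟨β, rfl⟩ := DMv_surj _ α ha
  clear ha
  have hb : β ∈ ⨆ h : ℂ, (DM W.toWeakModule).eig h := by rw [hV]; trivial
  induction hb using Submodule.iSup_induction' with
  | mem h β hβ =>
    refine (Set.finite_singleton h).subset ?_
    rintro g ⟨w, hw, hne⟩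
    have h1 := DM_eig _ h β hβ w
    rw [W.wt_L0 g w hw, map_smul, smul_eq_mul] at h1
    exact mul_right_cancel₀ hne h1
  | zero => simp
  | add a b _ _ ha hb =>
    refine (ha.union hb).subset ?_
    rintro g ⟨w, hw, hne⟩
    by_contra hc
    simp only [Set.mem_union, Set.mem_setOf_eq, not_or, not_exists, not_and, not_not] at hc
    apply hne
    rw [map_add, LinearMap.add_apply, hc.1 w hw, hc.2 w hw, add_zero]

theorem C2_ind (W : GenModule V) {S : Submodule ℂ W.carrier}
    (hh : ∀ (k : ℤ) (v : V.carrier), v ∈ V.wtSpace k → ∀ (h : ℂ) (w : W.carrier), w ∈ W.wt h →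
      oL W.toWeakModule (-2) v w ∈ S) : W.toWeakModule.Cn 2 ≤ S := by
  refine Submodule.span_le.2 ?_
  rintro x ⟨v, w, rfl⟩
  change oL W.toWeakModule (-2) v w ∈ S
  induction v using V_ind with
  | h0 => simp
  | hadd a b ha hb => rw [map_add, LinearMap.add_apply]; exact add_mem ha hb
  | hh k v hv =>
    induction w using W_ind W with
    | h0 => simp
    | hadd a b ha hb => rw [map_add]; exact add_mem ha hb
    | hh h w hw => exact hh k v hv h w hw

theorem proj_C2 (W : GenModule V) (g : ℂ) (x : W.carrier) (hx : x ∈ W.toWeakModule.Cn 2) :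
    pL W g x ∈ W.toWeakModule.Cn 2 := by
  have : W.toWeakModule.Cn 2 ≤ (W.toWeakModule.Cn 2).comap (pL W g) := by
    refine C2_ind W fun k v hv h w hw => ?_
    have h1 := W.wt_op k v hv h (-2) w hw
    rw [Submodule.mem_comap, pL_apply]
    by_cases hg : h + (k : ℂ) - ((-2 : ℤ) : ℂ) - 1 = g
    · rw [hg] at h1
      have := W.projW_eq g _ h1
      rw [oL_apply, this]
      exact Submodule.subset_span ⟨v, w, rfl⟩
    · rw [oL_apply, W.projW_ne _ g hg _ h1]
      exact zero_mem _
  exact this hx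

theorem bad_finite (hV : V.classA) (W : GenModule V) :
    {g : ℂ | ¬ W.wt g ≤ W.toWeakModule.Cn 2}.Finite := by
  classical
  set C := W.toWeakModule.Cn 2 with hC
  have h1 : ∀ g : ℂ, ∃ f : Module.Dual ℂ W.carrier, (∀ x ∈ C, f x = 0) ∧
      (¬ W.wt g ≤ C → ∃ x ∈ W.wt g, f x ≠ 0) := by
    intro g
    by_cases hg : W.wt g ≤ C
    · exact ⟨0, by simp, fun h => absurd hg h⟩
    · obtain ⟨x, hx, hxC⟩ := SetLike.not_le_iff_exists.1 hg
      obtain ⟨f, hf, hf2⟩ := Submodule.exists_le_ker_of_notMem hxC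
      exact ⟨f, fun y hy => hf2 hy, fun _ => ⟨x, hx, hf⟩⟩
  choose f hf hf2 using h1
  have hs : ∀ w, (Function.support fun g => f g (pL W g w)).Finite := by
    intro w
    refine (W.projW_finite w).subset fun g hg => ?_
    rw [Function.mem_support] at hg ⊢
    intro h0
    apply hg
    rw [pL_apply, h0, map_zero]
  let α : Module.Dual ℂ W.carrier :=
    { toFun := fun w => ∑ᶠ g, f g (pL W g w)
      map_add' := by
        intro a b
        rw [← finsum_add_distrib (hs a) (hs b)]
        simp
      map_smul' := by
        intro c a
        rw [RingHom.id_apply, smul_finsum' c (hs a)]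
        simp }
  have hα : ∀ w, α w = ∑ᶠ g, f g (pL W g w) := fun _ => rfl
  refine (fin_supp hV W α (dual_mem _ α ?_)).subset ?_
  · intro x hx
    rw [hα]
    apply finsum_eq_zero_of_forall_eq_zero
    intro g
    exact hf g _ (proj_C2 W g x hx)
  · intro g hg
    obtain ⟨x, hx, hne⟩ := hf2 g hg
    refine ⟨x, hx, ?_⟩
    rw [hα, finsum_eq_single _ g, pL_apply, W.projW_eq g x hx]
    · exact hne
    · intro g' hg'
      rw [pL_apply, W.projW_ne g g' (Ne.symm hg') x hx, map_zero]

/-- Determination lemma. -/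
theorem det (W : OrdModule V) {E : Type*} [AddCommGroup E] [Module ℂ E]
    (B : ℂ → W.carrier →ₗ[ℂ] E)
    (hrel : ∀ (k : ℤ) (u : V.carrier), u ∈ V.wtSpace k → ∀ (h : ℂ) (w : W.carrier), w ∈ W.wt h →
      ∃ T0 : ℕ, ∀ T, T0 ≤ T → ∑ i ∈ Finset.range T,
        cchoose k i • B (h + k + 1 - i) (oL W.toWeakModule (i - 2) u w) = 0)
    (hB : ∀ g, ¬ W.wt g ≤ W.toWeakModule.Cn 2 → ∀ x ∈ W.wt g, B g x = 0) :
    ∀ g, ∀ x ∈ W.wt g, B g x = 0 := by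
  intro g0
  obtain ⟨N, hN⟩ := W.wt_lower g0
  have main : ∀ n : ℕ, ∀ x ∈ W.wt (g0 + ((N + n : ℤ) : ℂ)), B (g0 + ((N + n : ℤ) : ℂ)) x = 0 := by
    intro n
    induction n using Nat.strong_induction_on with
    | _ n ih =>
    set g := g0 + ((N + n : ℤ) : ℂ) with hg
    have low : ∀ i : ℕ, 1 ≤ i → ∀ x ∈ W.wt (g - i), B (g - i) x = 0 := by
      intro i hi x hx
      by_cases hin : i ≤ n
      · have e : g - i = g0 + ((N + (n - i : ℕ) : ℤ) : ℂ) := by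
          rw [hg]; push_cast [Nat.cast_sub hin]; ring
        rw [e] at hx ⊢
        exact ih (n - i) (by omega) x hx
      · have e : g - i = g0 + ((N + n - i : ℤ) : ℂ) := by
          rw [hg]; push_cast; ring
        rw [e, hN _ (by omega), Submodule.mem_bot] at hx
        rw [hx, map_zero]
    by_cases hb : W.wt g ≤ W.toWeakModule.Cn 2
    · have hle : W.toWeakModule.Cn 2 ≤ LinearMap.ker (B g ∘ₗ pL W.toGenModule g) := by
        refine C2_ind W.toGenModule fun k v hv h w hw => ?_
        rw [LinearMap.mem_ker, LinearMap.comp_apply, pL_apply]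
        have h1 := W.wt_op k v hv h (-2) w hw
        by_cases hgg : h + (k : ℂ) - ((-2 : ℤ) : ℂ) - 1 = g
        · rw [hgg] at h1
          rw [oL_apply, W.projW_eq g _ h1]
          have hgg' : h + k + 1 = g := by rw [← hgg]; push_cast; ring
          obtain ⟨T0, hT⟩ := hrel k v hv h w hw
          have := hT (T0 + 1) (by omega)
          rw [Finset.sum_range_succ', Finset.sum_eq_zero] at this
          · simpa [cc_zero, hgg', oL_apply] using this
          · intro i _
            rw [hgg', low (i + 1) (by omega), smul_zero]
            have h2 := W.wt_op k v hv h (((i + 1 : ℕ) : ℤ) - 2) w hw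
            have e : h + (k : ℂ) - ((((i + 1 : ℕ) : ℤ) - 2 : ℤ) : ℂ) - 1 = g - (i + 1 : ℕ) := by
              rw [← hgg']; push_cast; ring
            rwa [e] at h2
        · rw [oL_apply, W.projW_ne _ g hgg _ h1, map_zero]
      intro x hx
      have := hle (hb hx)
      rwa [LinearMap.mem_ker, LinearMap.comp_apply, pL_apply, W.projW_eq g x hx] at this
    · exact hB g hb
  intro x hx
  by_cases h0 : 0 ≤ N
  · have := hN 0 h0
    rw [Int.cast_zero, add_zero] at this
    rw [this, Submodule.mem_bot] at hx
    rw [hx, map_zero]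
  · have e : g0 + ((N + (-N).toNat : ℤ) : ℂ) = g0 := by
      rw [Int.toNat_of_nonneg (by omega)]; simp
    have := main (-N).toNat
    rw [e] at this
    exact this x hx

end VAux
end

noncomputable section

namespace VAux

variable {V : VOA}

theorem finsum_eq_iff {E : Type*} [AddCommGroup E] (f g : ℕ → E) (A B : ℕ)
    (hf : ∀ i, A ≤ i → f i = 0) (hg : ∀ i, B ≤ i → g i = 0) :
    (∑ᶠ i, f i = ∑ᶠ i, g i) ↔ ∃ T0 : ℕ, ∀ T, T0 ≤ T →
      ∑ i ∈ Finset.range T, f i = ∑ i ∈ Finset.range T, g i := by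
  constructor
  · intro h
    refine ⟨A + B, fun T hT => ?_⟩
    rw [← finsum_range f T fun i hi => hf i (by omega),
      ← finsum_range g T fun i hi => hg i (by omega), h]
  · rintro ⟨T0, h⟩
    rw [finsum_range f (A + B + T0) fun i hi => hf i (by omega),
      finsum_range g (A + B + T0) fun i hi => hg i (by omega), h _ (by omega)]

section inter
variable {W1 W2 W3 : OrdModule V}

/-- The data of an intertwining operator without the Jacobi identity. -/
def preInt (W1 W2 W3 : OrdModule V) (I : W1.carrier → ℂ → W2.carrier → W3.carrier) : Prop :=
  (∀ (h : ℂ) (w2 : W2.carrier), IsLinearMap ℂ fun w1 => I w1 h w2) ∧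
  (∀ (w1 : W1.carrier) (h : ℂ), IsLinearMap ℂ (I w1 h)) ∧
  (∀ (w1 : W1.carrier) (w2 : W2.carrier) (h : ℂ),
    ∃ N : ℤ, ∀ n : ℤ, N ≤ n → I w1 (h + (n : ℂ)) w2 = 0)

theorem jac_iff (I : W1.carrier → ℂ → W2.carrier → W3.carrier) (hI : preInt W1 W2 W3 I)
    (u : V.carrier) (w1 : W1.carrier) (w2 : W2.carrier) (l m : ℤ) (h : ℂ) :
    ((∑ᶠ i : ℕ, cchoose m i • I (W1.op u (l + (i : ℤ)) w1) ((m : ℂ) + h - (i : ℂ)) w2)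
      = ∑ᶠ i : ℕ, ((-1 : ℂ) ^ i * cchoose l i) •
          (W3.op u (l + m - (i : ℤ)) (I w1 (h + (i : ℂ)) w2)
            - ((-1 : ℂ) ^ l) • I w1 ((l : ℂ) + h - (i : ℂ)) (W2.op u (m + (i : ℤ)) w2))) ↔
    ∃ T0 : ℕ, ∀ T : ℕ, T0 ≤ T →
    ((∑ i ∈ Finset.range T, cchoose m i • I (W1.op u (l + (i : ℤ)) w1) ((m : ℂ) + h - (i : ℂ)) w2)
      = ∑ i ∈ Finset.range T, ((-1 : ℂ) ^ i * cchoose l i) •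
          (W3.op u (l + m - (i : ℤ)) (I w1 (h + (i : ℂ)) w2)
            - ((-1 : ℂ) ^ l) • I w1 ((l : ℂ) + h - (i : ℂ)) (W2.op u (m + (i : ℤ)) w2))) := by
  obtain ⟨A, hA⟩ := o_trunc W1.toWeakModule u w1 l
  obtain ⟨B, hB⟩ := o_trunc W2.toWeakModule u w2 m
  obtain ⟨C, hC⟩ := hI.2.2 w1 w2 h
  refine finsum_eq_iff _ _ A (B + C.toNat) ?_ ?_
  · intro i hi
    have := hA i hi
    rw [oL_apply] at this
    rw [this, (hI.1 _ _).map_zero, smul_zero]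
  · intro i hi
    have := hB i (by omega)
    rw [oL_apply] at this
    have h2 := hC i (by omega)
    rw [Int.cast_natCast] at h2
    rw [this, h2, (hI.2.1 _ _).map_zero, (W3.op_linear_right _ _).map_zero, smul_zero, sub_zero,
      smul_zero]

/-- The space of intertwining operators. -/
def IntSp (W1 W2 W3 : OrdModule V) :
    Submodule ℂ (W1.carrier → ℂ → W2.carrier → W3.carrier) where
  carrier := {I | IsIntertwiner W1 W2 W3 I}
  zero_mem' := by
    refine ⟨fun h w2 => ⟨?_, ?_⟩, fun w1 h => ⟨?_, ?_⟩, ?_, ?_, ?_⟩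
    · intro a b; simp
    · intro a b; simp
    · intro a b; simp
    · intro a b; simp
    · intro w1 w2 h; exact ⟨0, fun n _ => rfl⟩
    · intro w1 h w2; simp
    · intro u w1 w2 l m h
      simp only [Pi.zero_apply, smul_zero, sub_zero, (W3.op_linear_right _ _).map_zero]
  add_mem' := by
    intro I J hI hJ
    have pI : preInt W1 W2 W3 I := ⟨hI.1, hI.2.1, hI.2.2.1⟩
    have pJ : preInt W1 W2 W3 J := ⟨hJ.1, hJ.2.1, hJ.2.2.1⟩
    have p : preInt W1 W2 W3 (I + J) := by
      refine ⟨fun h w2 => ⟨?_, ?_⟩, fun w1 h => ⟨?_, ?_⟩, ?_⟩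
      · intro a b
        simp only [Pi.add_apply, (pI.1 h w2).map_add, (pJ.1 h w2).map_add]; abel
      · intro a b
        simp only [Pi.add_apply, (pI.1 h w2).map_smul, (pJ.1 h w2).map_smul, smul_add]
      · intro a b
        simp only [Pi.add_apply, (pI.2.1 w1 h).map_add, (pJ.2.1 w1 h).map_add]; abel
      · intro a b
        simp only [Pi.add_apply, (pI.2.1 w1 h).map_smul, (pJ.2.1 w1 h).map_smul, smul_add]
      · intro w1 w2 h
        obtain ⟨A, hA⟩ := pI.2.2 w1 w2 h
        obtain ⟨B, hB⟩ := pJ.2.2 w1 w2 h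
        refine ⟨max A B, fun n hn => ?_⟩
        simp only [Pi.add_apply]
        rw [hA n (le_trans (le_max_left _ _) hn), hB n (le_trans (le_max_right _ _) hn), add_zero]
    refine ⟨p.1, p.2.1, p.2.2, ?_, ?_⟩
    · intro w1 h w2
      simp only [Pi.add_apply, hI.2.2.2.1 w1 h w2, hJ.2.2.2.1 w1 h w2, smul_add]
    · intro u w1 w2 l m h
      rw [jac_iff _ p]
      obtain ⟨A, hA⟩ := (jac_iff I pI u w1 w2 l m h).1 (hI.2.2.2.2 u w1 w2 l m h)
      obtain ⟨B, hB⟩ := (jac_iff J pJ u w1 w2 l m h).1 (hJ.2.2.2.2 u w1 w2 l m h)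
      refine ⟨A + B, fun T hT => ?_⟩
      have h1 := hA T (by omega)
      have h2 := hB T (by omega)
      simp only [Pi.add_apply, smul_add, Finset.sum_add_distrib]
      rw [h1, h2, ← Finset.sum_add_distrib]
      refine Finset.sum_congr rfl fun i _ => ?_
      rw [(W3.op_linear_right _ _).map_add]
      module
  smul_mem' := by
    intro c I hI
    have pI : preInt W1 W2 W3 I := ⟨hI.1, hI.2.1, hI.2.2.1⟩
    have p : preInt W1 W2 W3 (c • I) := by
      refine ⟨fun h w2 => ⟨?_, ?_⟩, fun w1 h => ⟨?_, ?_⟩, ?_⟩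
      · intro a b
        simp only [Pi.smul_apply, (pI.1 h w2).map_add, smul_add]
      · intro a b
        simp only [Pi.smul_apply, (pI.1 h w2).map_smul]; rw [smul_comm]
      · intro a b
        simp only [Pi.smul_apply, (pI.2.1 w1 h).map_add, smul_add]
      · intro a b
        simp only [Pi.smul_apply, (pI.2.1 w1 h).map_smul]; rw [smul_comm]
      · intro w1 w2 h
        obtain ⟨A, hA⟩ := pI.2.2 w1 w2 h
        refine ⟨A, fun n hn => ?_⟩
        simp only [Pi.smul_apply]
        rw [hA n hn, smul_zero]
    refine ⟨p.1, p.2.1, p.2.2, ?_, ?_⟩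
    · intro w1 h w2
      simp only [Pi.smul_apply, hI.2.2.2.1 w1 h w2]; rw [smul_comm]
    · intro u w1 w2 l m h
      rw [jac_iff _ p]
      obtain ⟨A, hA⟩ := (jac_iff I pI u w1 w2 l m h).1 (hI.2.2.2.2 u w1 w2 l m h)
      refine ⟨A, fun T hT => ?_⟩
      have h1 := congrArg (fun x => c • x) (hA T (by omega))
      simp only [Finset.smul_sum] at h1
      simp only [Pi.smul_apply]
      rw [Finset.sum_congr rfl fun i _ => smul_comm _ _ _, h1]
      refine Finset.sum_congr rfl fun i _ => ?_
      rw [(W3.op_linear_right _ _).map_smul]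
      module

/-- Modes of an intertwining operator as bilinear maps. -/
def iL (I : IntSp W1 W2 W3) (h : ℂ) : W1.carrier →ₗ[ℂ] W2.carrier →ₗ[ℂ] W3.carrier :=
  LinearMap.mk₂ ℂ (fun u w => I.1 u h w)
    (fun a b w => (I.2.1 h w).map_add a b)
    (fun c a w => (I.2.1 h w).map_smul c a)
    (fun a w x => (I.2.2.1 a h).map_add w x)
    (fun c a w => (I.2.2.1 a h).map_smul c w)

theorem iL_apply (I : IntSp W1 W2 W3) (h : ℂ) (a : W1.carrier) (b : W2.carrier) :
    iL I h a b = I.1 a h b := rfl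

theorem iborch (I : IntSp W1 W2 W3) (u : V.carrier) (w1 : W1.carrier) (w2 : W2.carrier) (l m : ℤ)
    (h : ℂ) : ∃ T0 : ℕ, ∀ T : ℕ, T0 ≤ T →
    ((∑ i ∈ Finset.range T, cchoose m i •
        iL I ((m : ℂ) + h - (i : ℂ)) (oL W1.toWeakModule (l + (i : ℤ)) u w1) w2)
      = ∑ i ∈ Finset.range T, ((-1 : ℂ) ^ i * cchoose l i) •
          (oL W3.toWeakModule (l + m - (i : ℤ)) u (iL I (h + (i : ℂ)) w1 w2)
            - ((-1 : ℂ) ^ l) • iL I ((l : ℂ) + h - (i : ℂ)) w1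
              (oL W2.toWeakModule (m + (i : ℤ)) u w2))) :=
  (jac_iff I.1 ⟨I.2.1, I.2.2.1, I.2.2.2.1⟩ u w1 w2 l m h).1 (I.2.2.2.2.2 u w1 w2 l m h)

theorem icomm (I : IntSp W1 W2 W3) (u : V.carrier) (w1 : W1.carrier) (w2 : W2.carrier) (m : ℤ)
    (h : ℂ) : ∃ T0 : ℕ, ∀ T : ℕ, T0 ≤ T →
      oL W3.toWeakModule m u (iL I h w1 w2) - iL I h w1 (oL W2.toWeakModule m u w2)
      = ∑ i ∈ Finset.range T, cchoose m i •
        iL I ((m : ℂ) + h - (i : ℂ)) (oL W1.toWeakModule i u w1) w2 := by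
  obtain ⟨T0, hT⟩ := iborch I u w1 w2 0 m h
  refine ⟨T0 + 1, fun T hT1 => ?_⟩
  obtain ⟨S, rfl⟩ : ∃ S, T = S + 1 := ⟨T - 1, by omega⟩
  have := hT (S + 1) (by omega)
  rw [sum_l_zero] at this
  simp only [zero_add, Nat.cast_zero, sub_zero, add_zero, zpow_zero, one_smul, Int.cast_zero]
    at this
  exact this.symm

theorem eig_wt (W : GenModule V) (c : ℂ) (x : W.carrier) (hx : W.op V.omega 1 x = c • x) :
    x ∈ W.wt c := by
  have h1 : ∀ (g : ℂ) (y : W.carrier), pL W g (oL W.toWeakModule 1 V.omega y) = g • pL W g y := by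
    intro g y
    induction y using W_ind W with
    | h0 => simp
    | hadd a b ha hb => simp only [map_add, ha, hb, smul_add]
    | hh h w hw =>
      rw [oL_apply, W.wt_L0 h w hw, map_smul]
      by_cases hg : h = g
      · rw [hg]
      · rw [pL_apply, W.projW_ne h g hg w hw, smul_zero, smul_zero]
  have h2 : ∀ g, g ≠ c → W.projW g x = 0 := by
    intro g hg
    have h3 := h1 g x
    rw [oL_apply, hx, map_smul, ← sub_eq_zero, ← sub_smul] at h3
    exact (smul_eq_zero.1 h3).resolve_left (sub_ne_zero.2 (Ne.symm hg))
  have h4 := W.projW_sum x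
  rw [finsum_eq_single _ c h2] at h4
  rw [← h4]
  exact W.projW_mem c x

theorem int_wt (I : IntSp W1 W2 W3) (h1 h2 h : ℂ) (w1 : W1.carrier) (w2 : W2.carrier)
    (hw1 : w1 ∈ W1.wt h1) (hw2 : w2 ∈ W2.wt h2) : iL I h w1 w2 ∈ W3.wt (h1 + h2 - h - 1) := by
  apply eig_wt
  obtain ⟨T0, hT⟩ := icomm I V.omega w1 w2 1 h
  have := hT (T0 + 2) (by omega)
  rw [sum_c_one] at this
  rw [oL_apply, oL_apply, W2.wt_L0 h2 w2 hw2, map_smul] at this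
  have e1 : iL I ((1 : ℤ) + h - (0 : ℕ)) (oL W1.toWeakModule (0 : ℕ) V.omega w1) w2
      = (-(1 + h)) • iL I h w1 w2 := by
    have := I.2.2.2.2.1 w1 (1 + h) w2
    rw [add_sub_cancel_left] at this
    simp only [Int.cast_one, Nat.cast_zero, sub_zero]
    exact this
  have e2 : iL I ((1 : ℤ) + h - (1 : ℕ)) (oL W1.toWeakModule (1 : ℕ) V.omega w1) w2
      = h1 • iL I h w1 w2 := by
    have e3 : oL W1.toWeakModule (1 : ℕ) V.omega w1 = h1 • w1 := W1.wt_L0 h1 w1 hw1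
    rw [e3, map_smul, Int.cast_one, Nat.cast_one, add_sub_cancel_left]
    rfl
  rw [e1, e2, sub_eq_iff_eq_add] at this
  rw [this]
  module

theorem exists_low (W : OrdModule V) (hW : W.toWeakModule.IsIrreducible) :
    ∃ h : ℂ, W.wt h ≠ ⊥ ∧ ∀ i : ℕ, W.wt (h - 1 - i) = ⊥ := by
  have h1 : ∃ g, W.wt g ≠ ⊥ := by
    by_contra hc
    push Not at hc
    apply hW.1
    symm
    rw [eq_bot_iff]
    intro x _
    induction x using W_ind W.toGenModule with
    | h0 => exact zero_mem _
    | hadd a b ha hb => exact add_mem (ha trivial) (hb trivial)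
    | hh h w hw => rwa [hc h] at hw
  obtain ⟨g, hg⟩ := h1
  obtain ⟨N, hN⟩ := W.wt_lower g
  have h2 : ∃ n : ℕ, W.wt (g + ((N + n : ℤ) : ℂ)) ≠ ⊥ := by
    refine ⟨(-N).toNat, ?_⟩
    have : 0 > N := by
      by_contra hc
      apply hg
      have := hN 0 (by omega)
      simpa using this
    have e : g + ((N + (-N).toNat : ℤ) : ℂ) = g := by
      rw [Int.toNat_of_nonneg (by omega)]; simp
    rwa [e]
  classical
  refine ⟨_, Nat.find_spec h2, fun i => ?_⟩
  set n := Nat.find h2 with hn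
  by_cases hi : i + 1 ≤ n
  · have := Nat.find_min h2 (m := n - (i + 1)) (by omega)
    rw [not_not] at this
    rw [← this]
    congr 1
    push_cast [Nat.cast_sub hi]; ring
  · have e : g + ((N + n : ℤ) : ℂ) - 1 - i = g + ((N + n - 1 - i : ℤ) : ℂ) := by
      push_cast; ring
    rw [e]
    exact hN _ (by omega)

theorem int_span_stable (I : IntSp W1 W2 W3) (w2 : W2.carrier) :
    W3.toWeakModule.IsStable (Submodule.span ℂ {x | ∃ w1 h, x = iL I h w1 w2}) := by
  set S := Submodule.span ℂ {x | ∃ w1 h, x = iL I h w1 w2} with hS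
  have key : ∀ (u : V.carrier) (w1 : W1.carrier) (h : ℂ) (p : ℤ),
      oL W3.toWeakModule p u (iL I h w1 w2) ∈ S := by
    intro u w1 h
    obtain ⟨N, hN⟩ := I.2.2.2.1 w1 w2 h
    obtain ⟨m0, hm⟩ := W2.trunc u w2
    have main : ∀ (d : ℕ) (j : ℕ), N ≤ j + d → ∀ p : ℤ,
        oL W3.toWeakModule p u (iL I (h + j) w1 w2) ∈ S := by
      intro d
      induction d with
      | zero =>
        intro j hj p
        have := hN j (by omega)
        rw [Int.cast_natCast] at this
        rw [iL_apply, this, map_zero]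
        exact zero_mem _
      | succ d ih =>
        intro j hj p
        obtain ⟨T0, hT⟩ := iborch I u w1 w2 (p - m0) m0 (h + j)
        have h1 := hT (T0 + 1) (by omega)
        have h2 : ∑ i ∈ Finset.range (T0 + 1), cchoose m0 i • iL I ((m0 : ℂ) + (h + j) - (i : ℂ))
            (oL W1.toWeakModule (p - m0 + (i : ℤ)) u w1) w2 ∈ S :=
          sum_mem fun i _ => Submodule.smul_mem _ _ (Submodule.subset_span ⟨_, _, rfl⟩)
        rw [h1, Finset.sum_range_succ'] at h2
        have h3 : ∀ i : ℕ, oL W2.toWeakModule (m0 + (i : ℤ)) u w2 = 0 := fun i => hm _ (by omega)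
        simp only [h3, map_zero, smul_zero, sub_zero, sub_add_cancel] at h2
        have h4 := (Submodule.add_mem_iff_right _ (sum_mem fun i _ => ?_)).1 h2
        · simpa [cc_zero] using h4
        · refine Submodule.smul_mem _ _ ?_
          have := ih (j + (i + 1)) (by push_cast; omega) (p - ((i + 1 : ℕ) : ℤ))
          have e : h + ((j + (i + 1) : ℕ) : ℂ) = h + j + ((i + 1 : ℕ) : ℂ) := by push_cast; ring
          rw [e] at this
          exact this
    intro p
    have := main N.toNat 0 (by omega) p
    simpa using this
  intro u p x hx
  change oL W3.toWeakModule p u x ∈ S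
  induction hx using Submodule.span_induction with
  | mem x hx => obtain ⟨w1, h, rfl⟩ := hx; exact key u w1 h p
  | zero => rw [map_zero]; exact zero_mem _
  | add a b _ _ ha hb => rw [map_add]; exact add_mem ha hb
  | smul c a _ ha => rw [map_smul]; exact Submodule.smul_mem _ _ ha

theorem int_ker_stable (I : IntSp W1 W2 W3) :
    W2.toWeakModule.IsStable (⨅ (w1 : W1.carrier) (h : ℂ), LinearMap.ker (iL I h w1)) := by
  intro u m x hx
  simp only [Submodule.mem_iInf, LinearMap.mem_ker] at hx ⊢
  intro w1 h
  obtain ⟨T0, hT⟩ := icomm I u w1 x m h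
  have := hT T0 le_rfl
  rw [Finset.sum_eq_zero, hx, map_zero, zero_sub, neg_eq_zero] at this
  · exact this
  · intro i _
    rw [hx, smul_zero]

/-- Corestricted weight projection. -/
def pE (W : GenModule V) (h : ℂ) : W.carrier →ₗ[ℂ] W.wt h :=
  (pL W h).codRestrict (W.wt h) (W.projW_mem h)

theorem pE_zero (W : GenModule V) (h : ℂ) (x : W.carrier) : pE W h x = 0 ↔ W.projW h x = 0 := by
  rw [← Subtype.coe_inj]; rfl

theorem fusion (hV : V.classA) (W1 W2 W3 : OrdModule V) (hW2 : W2.toWeakModule.IsIrreducible)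
    (hW3 : W3.toWeakModule.IsIrreducible) : FusionFinite W1 W2 W3 := by
  have hsp : Submodule.span ℂ {I : W1.carrier → ℂ → W2.carrier → W3.carrier |
        IsIntertwiner W1 W2 W3 I} = IntSp W1 W2 W3 := Submodule.span_eq (IntSp W1 W2 W3)
  unfold FusionFinite
  rw [hsp]
  obtain ⟨h2, hne2, hlow2⟩ := exists_low W2 hW2
  obtain ⟨h3, hne3, hlow3⟩ := exists_low W3 hW3
  obtain ⟨w2, hw2, hw20⟩ := (Submodule.ne_bot_iff _).1 hne2
  obtain ⟨w3, hw3, hw30⟩ := (Submodule.ne_bot_iff _).1 hne3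
  have hfin := bad_finite hV W1.toGenModule
  let G := {g : ℂ | ¬ W1.wt g ≤ W1.toWeakModule.Cn 2}
  have : Finite G := hfin
  have : ∀ g, FiniteDimensional ℂ (W1.wt g) := W1.wt_fd
  have : ∀ g, FiniteDimensional ℂ (W3.wt g) := W3.wt_fd
  let B : IntSp W1 W2 W3 → ℂ → W1.carrier →ₗ[ℂ] W3.wt h3 := fun I g =>
    pE W3.toGenModule h3 ∘ₗ (iL I (g + h2 - h3 - 1)).flip w2
  have hBa : ∀ I g x, B I g x = pE W3.toGenModule h3 (iL I (g + h2 - h3 - 1) x w2) :=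
    fun _ _ _ => rfl
  let F : IntSp W1 W2 W3 →ₗ[ℂ] ((g : G) → (W1.wt g.1 →ₗ[ℂ] W3.wt h3)) :=
    { toFun := fun I g => (B I g.1) ∘ₗ (W1.wt g.1).subtype
      map_add' := by
        intro I J
        ext g x
        simp [hBa, iL_apply]
      map_smul' := by
        intro c I
        ext g x
        simp [hBa, iL_apply] }
  refine Module.Finite.of_injective F ?_
  rw [injective_iff_map_eq_zero]
  intro I hI
  have hdet : ∀ g, ∀ x ∈ W1.wt g, B I g x = 0 := by
    refine det W1 (B I) ?_ ?_
    · intro k u hu h1 w1 hw1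
      obtain ⟨T0, hT⟩ := iborch I u w1 w2 (-2) k (h1 + h2 - h3)
      refine ⟨T0, fun T hT1 => ?_⟩
      have e := congrArg (pE W3.toGenModule h3) (hT T hT1)
      have z : ∑ i ∈ Finset.range T, ((-1 : ℂ) ^ i * cchoose (-2) i) •
          (oL W3.toWeakModule (-2 + k - (i : ℤ)) u (iL I (h1 + h2 - h3 + (i : ℂ)) w1 w2)
            - ((-1 : ℂ) ^ (-2 : ℤ)) • iL I (((-2 : ℤ) : ℂ) + (h1 + h2 - h3) - (i : ℂ)) w1
              (oL W2.toWeakModule (k + (i : ℤ)) u w2)) = 0 := by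
        refine Finset.sum_eq_zero fun i _ => ?_
        have z1 : iL I (h1 + h2 - h3 + (i : ℂ)) w1 w2 = 0 := by
          have := int_wt I h1 h2 (h1 + h2 - h3 + (i : ℂ)) w1 w2 hw1 hw2
          rw [show h1 + h2 - (h1 + h2 - h3 + (i : ℂ)) - 1 = h3 - 1 - i by ring, hlow3] at this
          simpa using this
        have z2 : oL W2.toWeakModule (k + (i : ℤ)) u w2 = 0 := by
          have := W2.wt_op k u hu h2 (k + i) w2 hw2
          rw [show h2 + (k : ℂ) - ((k + (i : ℤ) : ℤ) : ℂ) - 1 = h2 - 1 - i by push_cast; ring,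
            hlow2] at this
          exact (Submodule.mem_bot ℂ).1 this
        rw [z1, z2]; simp
      rw [z, map_zero, map_sum] at e
      rw [← e]
      refine Finset.sum_congr rfl fun i _ => ?_
      rw [hBa, map_smul]
      have e1 : h1 + k + 1 - i + h2 - h3 - 1 = (k : ℂ) + (h1 + h2 - h3) - i := by ring
      have e2 : (i : ℤ) - 2 = -2 + i := by ring
      rw [e1, e2]
    · intro g hg x hx
      have := congrFun hI ⟨g, hg⟩
      exact LinearMap.congr_fun this ⟨x, hx⟩
  have hz : ∀ (w1 : W1.carrier) (h : ℂ), W3.projW h3 (iL I h w1 w2) = 0 := by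
    intro w1 h
    induction w1 using W_ind W1.toGenModule with
    | h0 => simpa using (W3.projW_linear h3).map_zero
    | hadd a b ha hb => rw [map_add, LinearMap.add_apply, (W3.projW_linear h3).map_add, ha, hb, add_zero]
    | hh g w1 hw1 =>
      by_cases hh : h = g + h2 - h3 - 1
      · have := hdet g w1 hw1
        rw [hBa, ← hh, pE_zero] at this
        exact this
      · refine W3.projW_ne (g + h2 - h - 1) h3 ?_ _ (int_wt I g h2 h w1 w2 hw1 hw2)
        intro hc
        apply hh
        rw [← hc]; ring
  have hSbot : Submodule.span ℂ {x | ∃ w1 h, x = iL I h w1 w2} = ⊥ := by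
    refine (hW3.2 _ (int_span_stable I w2)).resolve_right fun htop => hw30 ?_
    have hle : Submodule.span ℂ {x | ∃ w1 h, x = iL I h w1 w2}
        ≤ LinearMap.ker (pL W3.toGenModule h3) := by
      refine Submodule.span_le.2 ?_
      rintro x ⟨w1, h, rfl⟩
      exact hz w1 h
    rw [htop] at hle
    have : W3.projW h3 w3 = 0 := hle (Submodule.mem_top (x := w3))
    rwa [W3.projW_eq h3 w3 hw3] at this
  have hK : (⨅ (w1 : W1.carrier) (h : ℂ), LinearMap.ker (iL I h w1)) = ⊤ := by
    refine (hW2.2 _ (int_ker_stable I)).resolve_left fun hbot => hw20 ?_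
    rw [← Submodule.mem_bot ℂ, ← hbot]
    simp only [Submodule.mem_iInf, LinearMap.mem_ker]
    intro w1 h
    rw [← Submodule.mem_bot ℂ, ← hSbot]
    exact Submodule.subset_span ⟨w1, h, rfl⟩
  ext w1 h x
  have hx : x ∈ (⨅ (w1 : W1.carrier) (h : ℂ), LinearMap.ker (iL I h w1)) := by
    rw [hK]; trivial
  simp only [Submodule.mem_iInf, LinearMap.mem_ker] at hx
  exact hx w1 h

end inter
end VAux
end

noncomputable section

namespace VAux

variable {V : VOA}

theorem fl_int (n : ℤ) : ⌊((n : ℂ)).re⌋ = n := by simp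

open Classical in
/-- `V` as an ordinary module over itself. -/
def vOrd (V : VOA) : OrdModule V where
  toWeakModule := adj V
  wt := fun c => if c = ((⌊c.re⌋ : ℤ) : ℂ) then V.wtSpace ⌊c.re⌋ else ⊥
  projW := fun c v => if c = ((⌊c.re⌋ : ℤ) : ℂ) then V.proj ⌊c.re⌋ v else 0
  projW_linear := fun c => by
    split_ifs
    · exact V.proj_linear _
    · exact ⟨fun _ _ => by simp, fun _ _ => by simp⟩
  projW_mem := fun c v => by
    split_ifs
    · exact V.proj_mem _ _
    · exact zero_mem _
  projW_eq := fun c v => by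
    split_ifs
    · exact V.proj_eq _ v
    · intro h; exact ((Submodule.mem_bot ℂ).1 h).symm
  projW_ne := fun g h hgh v hv => by
    split_ifs at hv ⊢ with h1 h2
    · refine V.proj_ne ⌊g.re⌋ ⌊h.re⌋ (fun hc => hgh ?_) v hv
      rw [h1, h2, hc]
    · rw [(Submodule.mem_bot ℂ).1 hv]
      exact (V.proj_linear _).map_zero
    · rfl
    · rfl
  projW_finite := fun v => by
    refine ((V.proj_finite v).image (fun n : ℤ => (n : ℂ))).subset ?_
    intro c hc
    rw [Function.mem_support] at hc
    split_ifs at hc with h1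
    · exact ⟨⌊c.re⌋, hc, h1.symm⟩
    · exact absurd rfl hc
  projW_sum := fun v => by
    have hinj : Function.Injective (fun n : ℤ => (n : ℂ)) := Int.cast_injective
    rw [finsum_eq_sum_of_support_subset (s := (V.proj_finite v).toFinset.map ⟨_, hinj⟩)]
    · rw [Finset.sum_map]
      simp only [Function.Embedding.coeFn_mk, fl_int, if_true]
      rw [← finsum_eq_sum _ (V.proj_finite v)]
      exact V.proj_sum v
    · intro c hc
      rw [Function.mem_support] at hc
      split_ifs at hc with h1
      · simp only [Finset.coe_map, Function.Embedding.coeFn_mk, Set.Finite.coe_toFinset]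
        exact ⟨⌊c.re⌋, hc, h1.symm⟩
      · exact absurd rfl hc
  wt_L0 := fun h w hw => by
    split_ifs at hw with h1
    · have := V.L_zero _ w hw
      rw [← h1] at this
      exact this
    · rw [(Submodule.mem_bot ℂ).1 hw, smul_zero]
      exact (V.op_linear_right _ _).map_zero
  wt_op := fun k v hv h n w hw => by
    split_ifs at hw with h1
    · have e : h + (k : ℂ) - (n : ℂ) - 1 = ((k + ⌊h.re⌋ - n - 1 : ℤ) : ℂ) := by
        conv_lhs => rw [h1]
        push_cast; ring
      rw [e, fl_int, if_pos rfl]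
      exact V.op_wt k _ n v hv w hw
    · rw [(Submodule.mem_bot ℂ).1 hw]
      have : (adj V).op v n 0 = 0 := (V.op_linear_right _ _).map_zero
      rw [this]
      exact zero_mem _
  wt_fd := fun h => by
    by_cases hh : h = ((⌊h.re⌋ : ℤ) : ℂ)
    · rw [if_pos hh]; exact V.fd _
    · rw [if_neg hh]; exact finiteDimensional_bot ℂ V.carrier
  wt_lower := fun h => by
    obtain ⟨N, hN⟩ := V.lower_trunc
    refine ⟨N - ⌊h.re⌋ - 1, fun m hm => ?_⟩
    split_ifs
    · apply hN
      simp only [Complex.add_re, Complex.intCast_re, Int.floor_add_intCast]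
      omega
    · rfl

theorem vOrd_wt (c : ℂ) (v : V.carrier) (h : v ∈ (vOrd V).wt c) :
    v = 0 ∨ ∃ n : ℤ, c = n ∧ v ∈ V.wtSpace n := by
  classical
  change v ∈ (if c = ((⌊c.re⌋ : ℤ) : ℂ) then V.wtSpace ⌊c.re⌋ else ⊥) at h
  split_ifs at h with h1
  · exact Or.inr ⟨_, h1, h⟩
  · exact Or.inl ((Submodule.mem_bot ℂ).1 h)

theorem vOrd_wt_int (n : ℤ) (v : V.carrier) (h : v ∈ V.wtSpace n) :
    v ∈ (vOrd V).wt (n : ℂ) := by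
  classical
  change v ∈ (if (n : ℂ) = ((⌊(n : ℂ).re⌋ : ℤ) : ℂ) then V.wtSpace ⌊(n : ℂ).re⌋ else ⊥)
  rw [fl_int, if_pos rfl]
  exact h

/-- Finite products of weak modules. -/
def PM {ι : Type} [Fintype ι] (M : ι → WeakModule V) : WeakModule V where
  carrier := (i : ι) → (M i).carrier
  op := fun v n x i => (M i).op v n (x i)
  op_linear_left := fun n w => by
    constructor
    · intro a b; ext i; exact ((M i).op_linear_left n (w i)).map_add a b
    · intro c a; ext i; exact ((M i).op_linear_left n (w i)).map_smul c a
  op_linear_right := fun u n => by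
    constructor
    · intro a b; ext i; exact ((M i).op_linear_right u n).map_add _ _
    · intro c a; ext i; exact ((M i).op_linear_right u n).map_smul _ _
  trunc := fun u w => by
    choose N hN using fun i => (M i).trunc u (w i)
    refine ⟨∑ i, |N i|, fun n hn => ?_⟩
    ext i
    refine hN i n (le_trans (le_abs_self _) (le_trans ?_ hn))
    exact Finset.single_le_sum (f := fun i => |N i|) (fun _ _ => abs_nonneg _) (Finset.mem_univ i)
  one_op := fun n w => by
    ext i
    rw [(M i).one_op]
    split_ifs <;> rfl
  borcherds := fun u v w l m n => by
    have sup : ∀ f : ι → ℕ, ∀ i, f i ≤ ∑ i, f i := fun f i =>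
      Finset.single_le_sum (fun _ _ => Nat.zero_le _) (Finset.mem_univ i)
    obtain ⟨A, hA⟩ := v_trunc u v l
    choose B hB using fun i => o_trunc (M i) v (w i) n
    choose C hC using fun i => o_trunc (M i) u (w i) m
    choose T hT using fun i => borch (M i) u v (w i) l m n
    set R := A + (∑ i, B i) + (∑ i, C i) + ∑ i, T i with hR
    rw [finsum_range _ R, finsum_range _ R]
    · ext i
      have := hT i R (by have := sup T i; omega)
      simp only [Finset.sum_apply, Pi.smul_apply, Pi.sub_apply]
      exact this
    · intro j hj
      ext i
      have h1 := hB i j (by have := sup B i; omega)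
      have h2 := hC i j (by have := sup C i; omega)
      rw [oL_apply] at h1 h2
      simp only [Pi.smul_apply, Pi.sub_apply, h1, h2, ((M i).op_linear_right _ _).map_zero,
        smul_zero, sub_zero, Pi.zero_apply]
    · intro j hj
      ext i
      have h1 := hA j (by omega)
      rw [vL_apply] at h1
      simp only [Pi.smul_apply, h1, ((M i).op_linear_left _ _).map_zero, smul_zero, Pi.zero_apply]

/-- The subspace generated by a vector. -/
def cyc (W : WeakModule V) (w : W.carrier) : Submodule ℂ W.carrier :=
  Submodule.span ℂ {x | ∃ (v : V.carrier) (n : ℤ), x = oL W n v w}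

theorem cyc_stable (W : WeakModule V) (w : W.carrier) : W.IsStable (cyc W w) := by
  have key : ∀ (u v : V.carrier) (q p : ℤ), oL W p u (oL W q v w) ∈ cyc W w := by
    intro u v q
    obtain ⟨N, hN⟩ := W.trunc v w
    obtain ⟨m0, hm⟩ := W.trunc u w
    have main : ∀ (d : ℕ) (q : ℤ), N ≤ q + d → ∀ p : ℤ, oL W p u (oL W q v w) ∈ cyc W w := by
      intro d
      induction d with
      | zero =>
        intro q hq p
        rw [oL_apply W q, hN q (by omega), map_zero]
        exact zero_mem _
      | succ d ih =>
        intro q hq p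
        obtain ⟨T0, hT⟩ := borch W u v w (p - m0) m0 q
        have h1 := hT (T0 + 1) (by omega)
        have h2 : ∑ i ∈ Finset.range (T0 + 1), cchoose m0 i • oL W (m0 + q - i)
            (vL V (p - m0 + (i : ℤ)) u v) w ∈ cyc W w :=
          sum_mem fun i _ => Submodule.smul_mem _ _ (Submodule.subset_span ⟨_, _, rfl⟩)
        rw [h1, Finset.sum_range_succ'] at h2
        have h3 : ∀ i : ℕ, oL W (m0 + (i : ℤ)) u w = 0 := fun i => hm _ (by omega)
        simp only [h3, map_zero, smul_zero, sub_zero, sub_add_cancel] at h2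
        have h4 := (Submodule.add_mem_iff_right _ (sum_mem fun i _ => ?_)).1 h2
        · simpa [cc_zero] using h4
        · exact Submodule.smul_mem _ _ (ih _ (by push_cast; omega) _)
    intro p
    exact main (N - q).toNat q (by omega) p
  intro u p x hx
  change oL W p u x ∈ cyc W w
  unfold cyc at hx
  induction hx using Submodule.span_induction with
  | mem x hx => obtain ⟨v, q, rfl⟩ := hx; exact key u v q p
  | zero => rw [map_zero]; exact zero_mem _
  | add a b _ _ ha hb => rw [map_add]; exact add_mem ha hb
  | smul c a _ ha => rw [map_smul]; exact Submodule.smul_mem _ _ ha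

theorem cyc_self (W : WeakModule V) (w : W.carrier) : w ∈ cyc W w := by
  refine Submodule.subset_span ⟨V.one, -1, ?_⟩
  rw [oL_apply, W.one_op, if_pos rfl]

theorem schur (M N : WeakModule V) (hM : M.IsIrreducible) (hN : N.IsIrreducible)
    (f : M.carrier →ₗ[ℂ] N.carrier) (hf : ∀ v n w, f (M.op v n w) = N.op v n (f w))
    (hne : f ≠ 0) : WeakModule.Equiv M N := by
  have hk : LinearMap.ker f = ⊥ := by
    refine (hM.2 _ ?_).resolve_right fun h => hne (LinearMap.ker_eq_top.1 h)
    intro v n x hx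
    rw [LinearMap.mem_ker] at hx ⊢
    rw [hf, hx]
    exact (N.op_linear_right _ _).map_zero
  have hr : LinearMap.range f = ⊤ := by
    refine (hN.2 _ ?_).resolve_left fun h => hne (LinearMap.range_eq_bot.1 h)
    rintro v n _ ⟨x, rfl⟩
    exact ⟨_, hf v n x⟩
  exact ⟨LinearEquiv.ofBijective f ⟨LinearMap.ker_eq_bot.1 hk, LinearMap.range_eq_top.1 hr⟩,
    hf⟩

theorem equiv_symm {M N : WeakModule V} (h : WeakModule.Equiv M N) : WeakModule.Equiv N M := by
  obtain ⟨e, he⟩ := h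
  refine ⟨e.symm, fun v n w => ?_⟩
  apply e.injective
  rw [he, e.apply_symm_apply, e.apply_symm_apply]

theorem density {ι : Type} [Fintype ι] (M : ι → WeakModule V)
    (hirr : ∀ i, (M i).IsIrreducible)
    (hne : ∀ i j, i ≠ j → ¬ WeakModule.Equiv (M i) (M j))
    (S : Submodule ℂ ((i : ι) → (M i).carrier))
    (hS : ∀ (v : V.carrier) (n : ℤ), ∀ y ∈ S, (fun i => (M i).op v n (y i)) ∈ S)
    (w : (i : ι) → (M i).carrier) (hw : w ∈ S) (hw0 : ∀ i, w i ≠ 0) : S = ⊤ := by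
  classical
  have main : ∀ s : Finset ι, ∀ x : (i : ι) → (M i).carrier, ∃ y ∈ S, ∀ j ∈ s, y j = x j := by
    intro s
    induction s using Finset.induction_on with
    | empty => intro x; exact ⟨0, zero_mem _, by simp⟩
    | insert a s ha ih =>
      let Z : Submodule ℂ ((i : ι) → (M i).carrier) :=
        S ⊓ ⨅ j ∈ s, LinearMap.ker (LinearMap.proj j)
      have hZ : ∀ y, y ∈ Z ↔ y ∈ S ∧ ∀ j ∈ s, y j = 0 := by
        intro y
        simp [Z, Submodule.mem_iInf]
      let K : Submodule ℂ (M a).carrier := Z.map (LinearMap.proj a)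
      have hK : (M a).IsStable K := by
        rintro v n _ ⟨y, hy, rfl⟩
        have hy' := (hZ y).1 hy
        refine ⟨fun i => (M i).op v n (y i), (hZ _).2 ⟨hS v n y hy'.1, fun j hj => ?_⟩, rfl⟩
        rw [hy'.2 j hj]
        exact ((M j).op_linear_right _ _).map_zero
      rcases (hirr a).2 K hK with hbot | htop
      · exfalso
        have uniq : ∀ y ∈ S, (∀ j ∈ s, y j = 0) → y a = 0 := by
          intro y hy hy0
          rw [← Submodule.mem_bot ℂ, ← hbot]
          exact ⟨y, (hZ y).2 ⟨hy, hy0⟩, rfl⟩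
        have uniq2 : ∀ y ∈ S, ∀ z ∈ S, (∀ j ∈ s, y j = z j) → y a = z a := by
          intro y hy z hz hyz
          have := uniq (y - z) (sub_mem hy hz) fun j hj => by
            rw [Pi.sub_apply, hyz j hj, sub_self]
          rwa [Pi.sub_apply, sub_eq_zero] at this
        choose Y hYS hY using ih
        let f : (b : ι) → (M b).carrier →ₗ[ℂ] (M a).carrier := fun b =>
          { toFun := fun x => Y (Pi.single b x) a
            map_add' := by
              intro x x'
              rw [← Pi.add_apply]
              refine uniq2 _ (hYS _) _ (add_mem (hYS _) (hYS _)) fun j hj => ?_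
              rw [Pi.add_apply, hY _ j hj, hY _ j hj, hY _ j hj, Pi.single_add, Pi.add_apply]
            map_smul' := by
              intro c x
              rw [RingHom.id_apply, ← Pi.smul_apply]
              refine uniq2 _ (hYS _) _ (Submodule.smul_mem _ _ (hYS _)) fun j hj => ?_
              rw [Pi.smul_apply, hY _ j hj, hY _ j hj, Pi.single_smul, Pi.smul_apply] }
        have hfa : ∀ b x, f b x = Y (Pi.single b x) a := fun _ _ => rfl
        have hf : ∀ b v n x, f b ((M b).op v n x) = (M a).op v n (f b x) := by
          intro b v n x
          rw [hfa, hfa]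
          refine uniq2 _ (hYS _) _ (hS v n _ (hYS (Pi.single b x))) fun j hj => ?_
          rw [hY _ j hj, hY _ j hj]
          by_cases hjb : j = b
          · subst hjb
            rw [Pi.single_eq_same, Pi.single_eq_same]
          · rw [Pi.single_eq_of_ne hjb, Pi.single_eq_of_ne hjb]
            exact ((M j).op_linear_right _ _).map_zero.symm
        have hf0 : ∀ b ∈ s, f b = 0 := by
          intro b hb
          by_contra hc
          exact hne b a (fun h => ha (h ▸ hb)) (schur _ _ (hirr b) (hirr a) (f b) (hf b) hc)
        apply hw0 a
        have := uniq2 w hw (∑ b ∈ s, Y (Pi.single b (w b))) (sum_mem fun b _ => hYS _) ?_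
        · rw [this, Finset.sum_apply]
          refine Finset.sum_eq_zero fun b hb => ?_
          rw [← hfa, hf0 b hb, LinearMap.zero_apply]
        · intro j hj
          rw [Finset.sum_apply, Finset.sum_congr rfl fun b _ => hY (Pi.single b (w b)) j hj,
            Finset.sum_eq_single j]
          · rw [Pi.single_eq_same]
          · intro b _ hbj
            rw [Pi.single_eq_of_ne (Ne.symm hbj)]
          · intro hc; exact absurd hj hc
      · intro x
        obtain ⟨y, hyS, hy⟩ := ih x
        have : x a - y a ∈ K := by rw [htop]; trivial
        obtain ⟨z, hz, hza⟩ := this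
        have hz' := (hZ z).1 hz
        have hza' : z a = x a - y a := hza
        refine ⟨y + z, add_mem hyS hz'.1, fun j hj => ?_⟩
        rw [Pi.add_apply]
        rcases Finset.mem_insert.1 hj with rfl | hj
        · rw [hza']; abel
        · rw [hy j hj, hz'.2 j hj, add_zero]
  rw [eq_top_iff]
  intro x _
  obtain ⟨y, hy, hyx⟩ := main Finset.univ x
  have : y = x := funext fun j => hyx j (Finset.mem_univ j)
  rwa [← this]

/-- Lowest weight data for an irreducible ℕ-gradable module. -/
theorem top_data (M : NGradedModule V) (hM : M.toWeakModule.IsIrreducible) :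
    ∃ (w : M.carrier) (φ : M.carrier →ₗ[ℂ] ℂ), φ w ≠ 0 ∧
      (∀ k : ℤ, ∀ u ∈ V.wtSpace k, ∀ n : ℤ, k ≤ n → M.op u n w = 0) ∧
      (∀ k : ℤ, ∀ u ∈ V.wtSpace k, ∀ n : ℤ, n ≠ k - 1 → φ (M.op u n w) = 0) := by
  classical
  have h1 : ∃ n : ℕ, M.gr n ≠ ⊥ := by
    by_contra hc
    push Not at hc
    apply hM.1
    rw [← M.gr_sup]
    symm
    rw [iSup_eq_bot]
    intro n
    by_cases hn : n < 0
    · exact M.gr_neg n hn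
    · have := hc n.toNat
      rwa [Int.toNat_of_nonneg (by omega)] at this
  have h2 := Nat.find_spec h1
  have h3 : ∀ m : ℤ, m < (Nat.find h1 : ℤ) → M.gr m = ⊥ := by
    intro m hm
    by_cases hn : m < 0
    · exact M.gr_neg m hn
    · have := Nat.find_min h1 (m := m.toNat) (by omega)
      rw [not_not] at this
      rwa [Int.toNat_of_nonneg (by omega)] at this
  set d : ℤ := (Nat.find h1 : ℤ) with hd
  obtain ⟨w, hw, hw0⟩ := (Submodule.ne_bot_iff _).1 h2
  have h4 : w ∉ (⨆ (m : ℤ) (_ : m ≠ d), M.gr m) := by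
    intro hc
    exact hw0 ((Submodule.disjoint_def.1 (M.gr_indep d)) w hw hc)
  obtain ⟨φ, hφ, hφ2⟩ := Submodule.exists_le_ker_of_notMem h4
  refine ⟨w, φ, hφ, ?_, ?_⟩
  · intro k u hu n hn
    have := M.gr_op k u hu n d w hw
    rw [h3 _ (by omega)] at this
    exact (Submodule.mem_bot ℂ).1 this
  · intro k u hu n hn
    have := M.gr_op k u hu n d w hw
    refine hφ2 ?_
    exact (le_iSup₂_of_le (f := fun (m : ℤ) (_ : m ≠ d) => M.gr m) (k + d - n - 1)
      (by omega) le_rfl) this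

end VAux
end

noncomputable section

namespace VAux

variable {V : VOA}

/-- Weights of `V` not contained in `C₂(V)`. -/
abbrev badV (V : VOA) : Type := {g : ℂ // ¬ (vOrd V).wt g ≤ (vOrd V).toWeakModule.Cn 2}

/-- The finite-dimensional space controlling irreducible modules. -/
abbrev ctrl (V : VOA) : Type := (g : badV V) → ((vOrd V).wt g.1 →ₗ[ℂ] ℂ)

/-- The functional `v ↦ φ(v_{n-1} w)`, `n = ⌊Re g⌋`. -/
def bF (W : WeakModule V) (w : W.carrier) (φ : W.carrier →ₗ[ℂ] ℂ) (g : ℂ) : V.carrier →ₗ[ℂ] ℂ :=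
  φ ∘ₗ (oL W (⌊g.re⌋ - 1)).flip w

theorem bF_apply (W : WeakModule V) (w : W.carrier) (φ : W.carrier →ₗ[ℂ] ℂ) (g : ℂ)
    (v : V.carrier) : bF W w φ g v = φ (oL W (⌊g.re⌋ - 1) v w) := rfl

theorem bF_rel (W : WeakModule V) (w : W.carrier) (φ : W.carrier →ₗ[ℂ] ℂ)
    (ha : ∀ k : ℤ, ∀ u ∈ V.wtSpace k, ∀ n : ℤ, k ≤ n → W.op u n w = 0)
    (k n : ℤ) (u v : V.carrier) (hu : u ∈ V.wtSpace k) (hv : v ∈ V.wtSpace n) :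
    ∃ T0 : ℕ, ∀ T : ℕ, T0 ≤ T → ∑ i ∈ Finset.range T,
      cchoose k i • φ (oL W (k + n - i) (vL V (-2 + i) u v) w) = 0 := by
  obtain ⟨T0, hT⟩ := borch W u v w (-2) k n
  refine ⟨T0, fun T hT1 => ?_⟩
  have e := congrArg φ (hT T hT1)
  have z : ∀ i ∈ Finset.range T, 
        ((-1 : ℂ) ^ i * cchoose (-2) i) • (oL W (-2 + k - i) u (oL W (n + i) v w)
            - ((-1 : ℂ) ^ (-2 : ℤ)) • oL W (-2 + n - i) v (oL W (k + i) u w)) = 0 := by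
    intro i _
    have z1 : oL W (n + i) v w = 0 := ha n v hv _ (by omega)
    have z2 : oL W (k + i) u w = 0 := ha k u hu _ (by omega)
    rw [z1, z2]
    simp
  rw [Finset.sum_eq_zero z, map_zero, map_sum] at e
  rw [← e]
  exact Finset.sum_congr rfl fun i _ => (map_smul _ _ _).symm

theorem bF_det (W : WeakModule V) (w : W.carrier) (φ : W.carrier →ₗ[ℂ] ℂ)
    (ha : ∀ k : ℤ, ∀ u ∈ V.wtSpace k, ∀ n : ℤ, k ≤ n → W.op u n w = 0)
    (hB : ∀ g : badV V, ∀ x ∈ (vOrd V).wt g.1, bF W w φ g.1 x = 0) :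
    ∀ n : ℤ, ∀ x ∈ V.wtSpace n, φ (oL W (n - 1) x w) = 0 := by
  have := det (vOrd V) (bF W w φ) ?_ fun g hg x hx => hB ⟨g, hg⟩ x hx
  · intro n x hx
    have h1 := this n x (vOrd_wt_int n x hx)
    have h2 : φ (oL W (⌊((n : ℤ) : ℂ).re⌋ - 1) x w) = 0 := h1
    rw [fl_int] at h2
    exact h2
  · intro k u hu h v hv
    rcases vOrd_wt h v hv with rfl | ⟨n, rfl, hv'⟩
    · refine ⟨0, fun T _ => Finset.sum_eq_zero fun i _ => ?_⟩
      have : oL (vOrd V).toWeakModule (i - 2) u (0 : V.carrier) = 0 :=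
        (V.op_linear_right _ _).map_zero
      rw [this]
      exact (congrArg _ (map_zero (bF W w φ _))).trans (smul_zero _)
    · obtain ⟨T0, hT⟩ := bF_rel W w φ ha k n u v hu hv'
      refine ⟨T0, fun T hT1 => (Finset.sum_congr rfl fun i _ => ?_).trans (hT T hT1)⟩
      congr 1
      have e1 : (n : ℂ) + k + 1 - i = ((n + k + 1 - i : ℤ) : ℂ) := by push_cast; ring
      have e2 : n + k + 1 - (i : ℤ) - 1 = k + n - i := by ring
      have e3 : (i : ℤ) - 2 = -2 + i := by ring
      rw [e1, e3]
      refine (bF_apply W w φ _ _).trans ?_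
      rw [fl_int, e2]
      rfl

/-- A functional on a finite product of modules. -/
def PMf {ι : Type} [Fintype ι] (M : ι → WeakModule V) (c : ι → ℂ)
    (φ : (i : ι) → (M i).carrier →ₗ[ℂ] ℂ) : (PM M).carrier →ₗ[ℂ] ℂ where
  toFun := fun x => ∑ i, c i * φ i (x i)
  map_add' := fun x y => by
    rw [← Finset.sum_add_distrib]
    refine Finset.sum_congr rfl fun i _ => ?_
    rw [← mul_add, ← map_add]
    rfl
  map_smul' := fun a x => by
    rw [RingHom.id_apply, smul_eq_mul, Finset.mul_sum]
    refine Finset.sum_congr rfl fun i _ => ?_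
    have : φ i ((a • x : (PM M).carrier) i) = a * φ i (x i) := (φ i).map_smul a (x i)
    rw [this]
    ring

theorem PMf_apply {ι : Type} [Fintype ι] (M : ι → WeakModule V) (c : ι → ℂ)
    (φ : (i : ι) → (M i).carrier →ₗ[ℂ] ℂ) (x : (PM M).carrier) :
    PMf M c φ x = ∑ i, c i * φ i (x i) := rfl

theorem indep {ι : Type} [Fintype ι] (M : ι → NGradedModule V)
    (hirr : ∀ i, (M i).toWeakModule.IsIrreducible)
    (hne : ∀ i j, i ≠ j → ¬ WeakModule.Equiv (M i).toWeakModule (M j).toWeakModule) :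
    ∃ b : ι → ctrl V, LinearIndependent ℂ b := by
  classical
  choose w φ hφ ha hc using fun i => top_data (M i) (hirr i)
  refine ⟨fun i g => bF (M i).toWeakModule (w i) (φ i) g.1 ∘ₗ ((vOrd V).wt g.1).subtype, ?_⟩
  rw [Fintype.linearIndependent_iff]
  intro c hsum i0
  let wP : (PM fun i => (M i).toWeakModule).carrier := w
  let Φ : (PM fun i => (M i).toWeakModule).carrier →ₗ[ℂ] ℂ := PMf _ c φ
  have hΦ : ∀ x : (PM fun i => (M i).toWeakModule).carrier,
      Φ x = ∑ i, c i * φ i (x i) := fun x => PMf_apply _ c φ x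
  have hdet := bF_det (PM fun i => (M i).toWeakModule) wP Φ ?_ ?_
  · have hker : cyc (PM fun i => (M i).toWeakModule) wP ≤ LinearMap.ker Φ := by
      refine Submodule.span_le.2 ?_
      rintro x ⟨v, n, rfl⟩
      change Φ (oL (PM fun i => (M i).toWeakModule) n v wP) = 0
      induction v using V_ind with
      | h0 => simp
      | hadd a b ha hb => rw [map_add, LinearMap.add_apply, map_add, ha, hb, add_zero]
      | hh k v hv =>
        by_cases hn : n = k - 1
        · rw [hn]; exact hdet k v hv
        · rw [hΦ]
          refine Finset.sum_eq_zero fun i _ => ?_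
          have := hc i k v hv n hn
          change c i * φ i ((M i).op v n (w i)) = 0
          rw [this, mul_zero]
    have htop : cyc (PM fun i => (M i).toWeakModule) wP = ⊤ :=
      density (fun i => (M i).toWeakModule) hirr hne (cyc (PM fun i => (M i).toWeakModule) wP)
        (fun v n y hy => cyc_stable (PM fun i => (M i).toWeakModule) wP v n y hy) w (cyc_self (PM fun i => (M i).toWeakModule) wP)
        (fun i h => hφ i (by rw [h, map_zero]))
    rw [htop] at hker
    let x : (PM fun i => (M i).toWeakModule).carrier := (Pi.single i0 (w i0) : (i : ι) → (M i).carrier)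
    have hx : Φ x = 0 := hker (Submodule.mem_top (x := x))
    rw [hΦ, Finset.sum_eq_single i0] at hx
    · have e : x i0 = w i0 := Pi.single_eq_same _ _
      rw [e] at hx
      exact (mul_eq_zero.1 hx).resolve_right (hφ i0)
    · intro i _ hi
      have e : x i = 0 := Pi.single_eq_of_ne hi _
      rw [e, map_zero, mul_zero]
    · intro h; exact absurd (Finset.mem_univ _) h
  · intro k u hu n hn
    exact funext fun i => ha i k u hu n hn
  · intro g x hx
    have := LinearMap.congr_fun (congrFun hsum g) ⟨x, hx⟩
    refine (hΦ (oL (PM fun i => (M i).toWeakModule) (⌊g.1.re⌋ - 1) x wP)).trans ?_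
    simp only [Finset.sum_apply, LinearMap.sum_apply, Pi.smul_apply, LinearMap.smul_apply,
      LinearMap.comp_apply, smul_eq_mul] at this
    exact this

theorem finite_irr (hV : V.classA) : ∃ (k : ℕ) (Ms : Fin k → NGradedModule V),
    ∀ M : NGradedModule V, M.toWeakModule.IsIrreducible →
      ∃ i : Fin k, WeakModule.Equiv M.toWeakModule (Ms i).toWeakModule := by
  classical
  have : Finite (badV V) := bad_finite hV (vOrd V).toGenModule
  have : ∀ g, FiniteDimensional ℂ ((vOrd V).wt g) := (vOrd V).wt_fd
  let Q : ℕ → Prop := fun r => ∃ M : Fin r → NGradedModule V,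
    (∀ i, (M i).toWeakModule.IsIrreducible) ∧
    (∀ i j, i ≠ j → ¬ WeakModule.Equiv (M i).toWeakModule (M j).toWeakModule)
  have hQ0 : Q 0 := ⟨fun i => i.elim0, fun i => i.elim0, fun i => i.elim0⟩
  have hbd : ∀ r, Q r → r ≤ Module.finrank ℂ (ctrl V) := by
    rintro r ⟨M, h1, h2⟩
    obtain ⟨b, hb⟩ := indep M h1 h2
    simpa using hb.fintype_card_le_finrank
  have hmax := Nat.findGreatest_spec (P := Q) (Nat.zero_le (Module.finrank ℂ (ctrl V))) hQ0
  set r := Nat.findGreatest Q (Module.finrank ℂ (ctrl V)) with hr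
  obtain ⟨Ms, h1, h2⟩ := hmax
  refine ⟨r, Ms, fun M hM => ?_⟩
  by_contra hno
  push Not at hno
  have hQ : Q (r + 1) := by
    refine ⟨Fin.cons M Ms, ?_, ?_⟩
    · intro i
      refine Fin.cases ?_ (fun j => ?_) i
      · exact hM
      · exact h1 j
    · intro i j
      refine Fin.cases ?_ (fun i => ?_) i <;> refine Fin.cases ?_ (fun j => ?_) j
      · intro h; exact absurd rfl h
      · intro _; exact hno j
      · intro _ h; exact hno i (equiv_symm h)
      · intro h; exact h2 i j fun hc => h (by rw [hc])
  have := Nat.le_findGreatest (hbd _ hQ) hQ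
  omega

theorem regular_classA (hV : V.regular) : V.classA := by
  intro M
  obtain ⟨ι, S, h1, _, h3⟩ := hV M
  rw [eq_top_iff, ← h3]
  refine iSup_le fun i => (h1 i).2.1.trans (iSup_mono fun h => inf_le_left)

end VAux
end


/-- If `V` is of class 𝒜, then `V` has only finitely many
inequivalent irreducible ℕ-gradable weak `V`-modules, and for any three irreducible
`V`-modules `W₁, W₂, W₃` the fusion rule `dim I(W₃; W₁W₂)` is finite.  In particular
both conclusions hold when `V` is regular. -/
theorem finitely_many_irreducibles_and_finite_fusion (V : VOA) :
    (V.classA →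
      (∃ (k : ℕ) (Ms : Fin k → NGradedModule V),
        ∀ M : NGradedModule V, M.toWeakModule.IsIrreducible →
          ∃ i : Fin k, WeakModule.Equiv M.toWeakModule (Ms i).toWeakModule) ∧
      (∀ W1 W2 W3 : OrdModule V,
        W1.toGenModule.toWeakModule.IsIrreducible →
        W2.toGenModule.toWeakModule.IsIrreducible →
        W3.toGenModule.toWeakModule.IsIrreducible →
        FusionFinite W1 W2 W3)) ∧
    (V.regular →
      (∃ (k : ℕ) (Ms : Fin k → NGradedModule V),
        ∀ M : NGradedModule V, M.toWeakModule.IsIrreducible →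
          ∃ i : Fin k, WeakModule.Equiv M.toWeakModule (Ms i).toWeakModule) ∧
      (∀ W1 W2 W3 : OrdModule V,
        W1.toGenModule.toWeakModule.IsIrreducible →
        W2.toGenModule.toWeakModule.IsIrreducible →
        W3.toGenModule.toWeakModule.IsIrreducible →
        FusionFinite W1 W2 W3)) := by
  exact ⟨fun hV => ⟨VAux.finite_irr hV, fun W1 W2 W3 _ h2 h3 => VAux.fusion hV W1 W2 W3 h2 h3⟩,
    fun hR => ⟨VAux.finite_irr (VAux.regular_classA hR), fun W1 W2 W3 _ h2 h3 =>
      VAux.fusion (VAux.regular_classA hR) W1 W2 W3 h2 h3⟩⟩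
end

section
/- Let V be a vertex operator algebra with V = ⊕_{n∈ℕ} V_{(n)} and V_{(0)} = ℂ1, and let W be an ordinary V-module with W = ⊕_{n∈ℕ} W_{(h+n)} for some h ∈ ℂ. Let W⁰ be a graded subspace of W with W = W⁰ + B(W). Then the image of W⁰ in A(W) = W/O(W) generates A(W) as an A(V)-bimodule. In particular, if dim W/B(W) < ∞, then A(W) is a finitely generated A(V)-bimodule. -/
theorem aux_single {M : Type} [AddCommGroup M] [Module ℂ M] (T : Submodule ℂ M) (f : ℕ → M) (j : ℕ)
    (hf : (Function.support f).Finite) (hs : (∑ᶠ i, f i) ∈ T) (ho : ∀ i, i ≠ j → f i ∈ T) :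
    f j ∈ T := by
  classical
  have hsub : Function.support f ⊆ ↑(insert j hf.toFinset) := by
    intro x hx
    simp only [Finset.coe_insert, Set.Finite.coe_toFinset]
    exact Or.inr hx
  rw [finsum_eq_sum_of_support_subset f hsub,
    ← Finset.add_sum_erase _ f (Finset.mem_insert_self j hf.toFinset)] at hs
  refine (Submodule.add_mem_iff_left T ?_).1 hs
  exact Submodule.sum_mem _ fun i hi => ho i (Finset.ne_of_mem_erase hi)

theorem aux_support {V : VOA} (W : WeakModule V) (c : ℕ → ℂ) (v : V.carrier) (w : W.carrier) :
    (Function.support fun i : ℕ => c i • W.op v ((i : ℤ) - 1) w).Finite := by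
  obtain ⟨N, hN⟩ := W.trunc v w
  refine (Set.finite_lt_nat (N + 1).toNat).subset ?_
  intro i hi
  by_contra hlt
  simp only [Set.mem_ofPred_eq, not_lt] at hlt
  apply hi
  have : N ≤ (i : ℤ) - 1 := by omega
  simp [hN _ this]

theorem aux_homog {V : VOA} (W : GenModule V) (S : Submodule ℂ W.carrier)
    (hS : ∀ g, W.wt g ≤ S) (w : W.carrier) : w ∈ S := by
  rw [← W.projW_sum w]
  exact finsum_induction (p := fun x => x ∈ S) S.zero_mem
    (fun x y hx hy => S.add_mem hx hy) (fun g => hS g (W.projW_mem g w))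

theorem cchoose_zero' (m : ℤ) : cchoose m 0 = 1 := by simp [cchoose]

theorem cchoose_one' (m : ℤ) : cchoose m 1 = m := by simp [cchoose]

theorem aux_minus_one {V : VOA} (W : GenModule V) (h : ℂ) (T : Submodule ℂ W.carrier)
    (hT : W.toWeakModule.BimoduleClosed T) (n : ℤ) (ih : ∀ m : ℤ, m < n → W.wt (h + m) ≤ T)
    (k : ℤ) (hk : 1 ≤ k) (v : V.carrier) (hv : v ∈ V.wtSpace k) (w : W.carrier)
    (hw : w ∈ W.wt (h + ((n - k : ℤ) : ℂ))) : W.op v (-1) w ∈ T := by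
  have hwT : w ∈ T := ih _ (by omega) hw
  have := aux_single T _ 0 (aux_support W.toWeakModule (cchoose k) v w) (hT k v hv w hwT).1 ?_
  · simpa [cchoose_zero'] using this
  · intro i hi
    refine T.smul_mem _ (ih (n - i) (by omega) ?_)
    have := W.wt_op k v hv _ ((i : ℤ) - 1) w hw
    convert this using 2
    push_cast
    ring

theorem aux_zero {V : VOA} (W : GenModule V) (h : ℂ) (T : Submodule ℂ W.carrier)
    (hT : W.toWeakModule.BimoduleClosed T) (n : ℤ) (ih : ∀ m : ℤ, m < n → W.wt (h + m) ≤ T)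
    (k : ℤ) (hk : 2 ≤ k) (v : V.carrier) (hv : v ∈ V.wtSpace k) (w : W.carrier)
    (hw : w ∈ W.wt (h + ((n - k + 1 : ℤ) : ℂ))) : W.op v 0 w ∈ T := by
  have hwT : w ∈ T := ih _ (by omega) hw
  have hm := T.sub_mem (hT k v hv w hwT).1 (hT k v hv w hwT).2
  rw [← finsum_sub_distrib (aux_support W.toWeakModule (cchoose k) v w)
    (aux_support W.toWeakModule (cchoose (k - 1)) v w)] at hm
  simp only [← sub_smul] at hm
  have := aux_single T _ 1
    (aux_support W.toWeakModule (fun i => cchoose k i - cchoose (k - 1) i) v w) hm ?_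
  · simpa [cchoose_one'] using this
  · intro i hi
    rcases Nat.eq_zero_or_pos i with rfl | hpos
    · simp [cchoose_zero']
    refine T.smul_mem _ (ih (n - i + 1) (by omega) ?_)
    have := W.wt_op k v hv _ ((i : ℤ) - 1) w hw
    convert this using 2
    push_cast
    ring

theorem aux_proj {V : VOA} (W : GenModule V) (h : ℂ) (T : Submodule ℂ W.carrier) (n : ℤ)
    (k j : ℤ) (v : V.carrier) (hv : v ∈ V.wtSpace k)
    (H : ∀ w ∈ W.wt (h + ((n - k + j + 1 : ℤ) : ℂ)), W.op v j w ∈ T) (w : W.carrier) :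
    W.projW (h + n) (W.op v j w) ∈ T := by
  let φ : W.carrier →ₗ[ℂ] W.carrier :=
    (IsLinearMap.mk' _ (W.projW_linear (h + n))).comp (IsLinearMap.mk' _ (W.op_linear_right v j))
  refine aux_homog W (T.comap φ) ?_ w
  intro g w hw
  change W.projW (h + n) (W.op v j w) ∈ T
  have hop := W.wt_op k v hv g j w hw
  by_cases hg : g + (k : ℂ) - (j : ℂ) - 1 = h + n
  · rw [hg] at hop
    rw [W.projW_eq _ _ hop]
    apply H
    convert hw using 2
    push_cast
    linear_combination -hg
  · rw [W.projW_ne _ _ hg _ hop]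
    exact T.zero_mem

theorem aux_BW {V : VOA} (W : GenModule V) (h : ℂ) (T : Submodule ℂ W.carrier)
    (hT : W.toWeakModule.BimoduleClosed T) (n : ℤ) (ih : ∀ m : ℤ, m < n → W.wt (h + m) ≤ T)
    (b : W.carrier) (hb : b ∈ W.toWeakModule.BW) : W.projW (h + n) b ∈ T := by
  let P : W.carrier →ₗ[ℂ] W.carrier := IsLinearMap.mk' _ (W.projW_linear (h + n))
  suffices hle : W.toWeakModule.BW ≤ T.comap P from hle hb
  refine Submodule.span_le.2 ?_
  rintro x (⟨v, hv, w, rfl⟩ | ⟨k, hk, v, hv, w, rfl⟩)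
  · let φ : V.carrier →ₗ[ℂ] W.carrier := IsLinearMap.mk' _ (W.op_linear_left (-1) w)
    suffices hle : V.pos ≤ T.comap (P.comp φ) from hle hv
    refine iSup₂_le fun k hk v hv => ?_
    refine aux_proj W h T n k (-1) v hv (fun w hw => ?_) w
    refine aux_minus_one W h T hT n ih k hk v hv w ?_
    convert hw using 4
    ring
  · refine aux_proj W h T n k 0 v hv (fun w hw => ?_) w
    refine aux_zero W h T hT n ih k hk v hv w ?_
    convert hw using 4
    ring

theorem aux_main {V : VOA} (W : GenModule V) (h : ℂ)
    (hwts : ∀ g : ℂ, W.wt g ≠ ⊥ → ∃ n : ℕ, g = h + (n : ℂ))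
    (W0 : Submodule ℂ W.carrier)
    (hW0graded : ∀ w ∈ W0, ∀ g : ℂ, W.projW g w ∈ W0)
    (hW0sum : W0 ⊔ W.toWeakModule.BW = ⊤) (T : Submodule ℂ W.carrier)
    (h0T : W0 ≤ T) (hT : W.toWeakModule.BimoduleClosed T) : T = ⊤ := by
  have key : ∀ N : ℕ, ∀ m : ℤ, m < N → W.wt (h + m) ≤ T := by
    intro N
    induction N with
    | zero =>
      intro m hm
      by_cases hb : W.wt (h + m) = ⊥
      · rw [hb]; exact bot_le
      · obtain ⟨n, hn⟩ := hwts _ hb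
        have : (m : ℂ) = ((n : ℤ) : ℂ) := by
          push_cast
          exact add_left_cancel hn
        have := Int.cast_injective this
        push_cast at hm
        omega
    | succ N ihN =>
      intro m hm
      rcases lt_or_ge m (N : ℤ) with hlt | hge
      · exact ihN m hlt
      have hmN : m = N := by push_cast at hm; omega
      intro w hw
      have hwtop : w ∈ W0 ⊔ W.toWeakModule.BW := by rw [hW0sum]; trivial
      obtain ⟨a, ha, b, hb, rfl⟩ := Submodule.mem_sup.1 hwtop
      rw [← W.projW_eq _ _ hw, (W.projW_linear _).map_add]
      refine T.add_mem (h0T (hW0graded a ha _)) (aux_BW W h T hT m ?_ b hb)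
      intro m' hm'
      exact ihN m' (by omega)
  rw [eq_top_iff]
  intro w _
  refine aux_homog W T (fun g => ?_) w
  by_cases hb : W.wt g = ⊥
  · rw [hb]; exact bot_le
  · obtain ⟨n, rfl⟩ := hwts _ hb
    have := key (n + 1) n (by push_cast; omega)
    simpa using this

theorem aux_fin {V : VOA} (W : GenModule V)
    (hfd : FiniteDimensional ℂ (W.carrier ⧸ W.toWeakModule.BW)) :
    ∃ S : Finset W.carrier,
      (∀ w ∈ Submodule.span ℂ (S : Set W.carrier), ∀ g : ℂ,
        W.projW g w ∈ Submodule.span ℂ (S : Set W.carrier)) ∧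
      Submodule.span ℂ (S : Set W.carrier) ⊔ W.toWeakModule.BW = ⊤ := by
  classical
  obtain ⟨s, hs⟩ := Module.Finite.fg_top (R := ℂ) (M := W.carrier ⧸ W.toWeakModule.BW)
  let lift : (W.carrier ⧸ W.toWeakModule.BW) → W.carrier := Quotient.out
  let S : Finset W.carrier := s.biUnion fun q =>
    (W.projW_finite (lift q)).toFinset.image fun g => W.projW g (lift q)
  have hSmem : ∀ q ∈ s, ∀ g, W.projW g (lift q) ∈ Submodule.span ℂ (S : Set W.carrier) := by
    intro q hq g
    by_cases hz : W.projW g (lift q) = 0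
    · rw [hz]; exact Submodule.zero_mem _
    · apply Submodule.subset_span
      simp only [S, Finset.coe_biUnion, Set.mem_iUnion, Finset.mem_coe, Finset.mem_image]
      exact ⟨q, hq, g, by simpa using hz, rfl⟩
  refine ⟨S, ?_, ?_⟩
  · intro w hw g
    let P : W.carrier →ₗ[ℂ] W.carrier := IsLinearMap.mk' _ (W.projW_linear g)
    suffices hle : Submodule.span ℂ (S : Set W.carrier) ≤
      (Submodule.span ℂ (S : Set W.carrier)).comap P from hle hw
    refine Submodule.span_le.2 ?_
    intro x hx
    change W.projW g x ∈ Submodule.span ℂ (S : Set W.carrier)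
    have hx' := hx
    simp only [S, Finset.coe_biUnion, Set.mem_iUnion, Finset.mem_coe, Finset.mem_image] at hx'
    obtain ⟨q, hq, g', _, rfl⟩ := hx'
    by_cases hg : g' = g
    · subst hg
      rw [W.projW_eq _ _ (W.projW_mem _ _)]
      exact Submodule.subset_span hx
    · rw [W.projW_ne _ _ hg _ (W.projW_mem _ _)]
      exact Submodule.zero_mem _
  · have hmap : (Submodule.span ℂ (S : Set W.carrier)).map W.toWeakModule.BW.mkQ = ⊤ := by
      rw [eq_top_iff, ← hs]
      refine Submodule.span_le.2 ?_
      intro q hq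
      refine ⟨lift q, ?_, Quotient.out_eq q⟩
      change lift q ∈ Submodule.span ℂ (S : Set W.carrier)
      rw [← W.projW_sum (lift q)]
      exact finsum_induction (p := fun x => x ∈ Submodule.span ℂ (S : Set W.carrier))
        (Submodule.zero_mem _) (fun x y hx hy => Submodule.add_mem _ hx hy) (hSmem q hq)
    have := congrArg (Submodule.comap W.toWeakModule.BW.mkQ) hmap
    rw [Submodule.comap_map_mkQ, Submodule.comap_top, sup_comm] at this
    exact this

/-- Let `V = ⊕_{n∈ℕ} V₍ₙ₎` with `V₍₀₎ = ℂ1`, and let `W` be an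
ordinary `V`-module with `W = ⊕_{n∈ℕ} W₍ₕ₊ₙ₎` for some `h ∈ ℂ`.  Let `W⁰` be a graded
subspace of `W` with `W = W⁰ + B(W)`.  Then the image of `W⁰` in `A(W) = W/O(W)`
generates `A(W)` as an `A(V)`-bimodule — that is, every subspace `T ⊆ W` containing
`O(W)` and `W⁰` whose image in `A(W)` is closed under the Frenkel–Zhu left and right
`A(V)`-actions equals `W`.  In particular, if `dim W/B(W) < ∞`, then `A(W)` is a
finitely generated `A(V)`-bimodule. -/
theorem AW_generated_by_complement_of_BW (V : VOA)
    (hneg : ∀ n : ℤ, n < 0 → V.wtSpace n = ⊥)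
    (h0 : V.wtSpace 0 = Submodule.span ℂ {V.one})
    (W : OrdModule V) (h : ℂ)
    (hwts : ∀ g : ℂ, W.wt g ≠ ⊥ → ∃ n : ℕ, g = h + (n : ℂ))
    (W0 : Submodule ℂ W.carrier)
    (hW0graded : ∀ w ∈ W0, ∀ g : ℂ, W.projW g w ∈ W0)
    (hW0sum : W0 ⊔ W.toGenModule.toWeakModule.BW = ⊤) :
    (∀ T : Submodule ℂ W.carrier,
      W.toGenModule.toWeakModule.OW ≤ T → W0 ≤ T →
      W.toGenModule.toWeakModule.BimoduleClosed T → T = ⊤) ∧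
    (FiniteDimensional ℂ (W.carrier ⧸ W.toGenModule.toWeakModule.BW) →
      ∃ S : Finset W.carrier, ∀ T : Submodule ℂ W.carrier,
        W.toGenModule.toWeakModule.OW ≤ T → ↑S ⊆ (T : Set W.carrier) →
        W.toGenModule.toWeakModule.BimoduleClosed T → T = ⊤) := by
  refine ⟨fun T _ h0T hT => aux_main W.toGenModule h hwts W0 hW0graded hW0sum T h0T hT, ?_⟩
  intro hfd
  obtain ⟨S, hS1, hS2⟩ := aux_fin W.toGenModule hfd
  exact ⟨S, fun T _ hST hT => aux_main W.toGenModule h hwts _ hS1 hS2 T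
    (Submodule.span_le.2 hST) hT⟩
end
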